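/- arXiv:2505.23445 — 6 statements merged into one kernel-verified Lean document; each statement's English description precedes it below -/
import Mathlib

section
/- Let (G, ξ) be a centered bivariate Gaussian vector with covariance matrix [[a, c], [c, b]], a, b > 0, |c| < √(ab), and M = G + ξ. Then as m → ∞, E[G² | M > m] = ((a+c)²/(a+b+2c)²)·m² + (a+c)²/(a+b+2c) + a - 2(a+c)²/m² + o(m⁻²). -/
open MeasureTheory ProbabilityTheory Filter Asymptotics Real

/-- Expectation of `X` conditioned on an event `s` (i.e. `E[X·1ₛ]/P(s)`). -/
noncomputable def condExpEvent {Ω : Type*} [MeasureSpace Ω] (X : Ω → ℝ) (s : Set Ω) : ℝ :=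
  (∫ ω in s, X ω) / (ℙ s).toReal


lemma pdf_eq_aux (S : ℝ) (hS : 0 < S) (x : ℝ) : gaussianPDFReal 0 S.toNNReal x =
    (√(2 * π * S))⁻¹ * rexp (-(1 / (2 * S)) * x ^ 2) := by
  rw [gaussianPDFReal_def]
  simp only [Real.coe_toNNReal S hS.le, sub_zero]
  congr 2
  field_simp

lemma pdf_deriv_aux (S : ℝ) (hS : 0 < S) (x : ℝ) :
    HasDerivAt (gaussianPDFReal 0 S.toNNReal) (-(x / S) * gaussianPDFReal 0 S.toNNReal x) x := by
  have h : gaussianPDFReal 0 S.toNNReal =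
    fun x => (√(2 * π * S))⁻¹ * rexp (-(1 / (2 * S)) * x ^ 2) := by
    ext x; exact pdf_eq_aux S hS x
  rw [h]
  have h1 : HasDerivAt (fun x : ℝ => -(1 / (2 * S)) * x ^ 2) (-(1 / (2 * S)) * (2 * x)) x := by
    simpa using (hasDerivAt_pow 2 x).const_mul (-(1 / (2 * S)))
  refine (h1.exp.const_mul (√(2 * π * S))⁻¹).congr_deriv ?_
  field_simp

lemma pdf_tendsto_aux (S : ℝ) (hS : 0 < S) (n : ℕ) :
    Tendsto (fun x => x ^ n * gaussianPDFReal 0 S.toNNReal x) atTop (nhds 0) := by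
  have h := (tendsto_rpow_abs_mul_exp_neg_mul_sq_cocompact (a := 1 / (2 * S)) (by positivity)
    (n : ℝ)).mono_left atTop_le_cocompact
  have h2 := h.const_mul (√(2 * π * S))⁻¹
  rw [mul_zero] at h2
  refine h2.congr' ?_
  filter_upwards [eventually_gt_atTop 0] with x hx
  rw [pdf_eq_aux S hS, abs_of_pos hx, rpow_natCast]
  ring

lemma pdf_int_aux (S : ℝ) (hS : 0 < S) (n : ℕ) :
    Integrable (fun x => x ^ n * gaussianPDFReal 0 S.toNNReal x) := by
  have h := (integrable_rpow_mul_exp_neg_mul_sq (b := 1 / (2 * S)) (by positivity)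
    (s := (n : ℝ)) (by have : (0:ℝ) ≤ n := by positivity
                       linarith)).const_mul (√(2 * π * S))⁻¹
  refine h.congr (ae_of_all _ fun x => ?_)
  simp only [pdf_eq_aux S hS, rpow_natCast]
  ring

lemma tail_sq_aux (S : ℝ) (hS : 0 < S) (m : ℝ) :
    ∫ x in Set.Ioi m, x ^ 2 * gaussianPDFReal 0 S.toNNReal x =
      S * (∫ x in Set.Ioi m, gaussianPDFReal 0 S.toNNReal x)
        + m * S * gaussianPDFReal 0 S.toNNReal m := by
  have i2 := (pdf_int_aux S hS 2).integrableOn (s := Set.Ioi m)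
  have i0 := ((integrable_gaussianPDFReal 0 S.toNNReal).const_mul S).integrableOn (s := Set.Ioi m)
  have h := integral_Ioi_of_hasDerivAt_of_tendsto' (a := m) (m := 0)
    (f := fun x => -S * (x * gaussianPDFReal 0 S.toNNReal x))
    (f' := fun x => x ^ 2 * gaussianPDFReal 0 S.toNNReal x - S * gaussianPDFReal 0 S.toNNReal x)
    (fun x _ => by
      refine (((hasDerivAt_id x).mul (pdf_deriv_aux S hS x)).const_mul (-S)).congr_deriv ?_
      simp only [id]
      field_simp
      ring) (i2.sub i0)
    (by simpa using (pdf_tendsto_aux S hS 1).const_mul (-S))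
  rw [integral_sub i2 i0, integral_const_mul] at h
  linarith

lemma tail_bounds_aux (S : ℝ) (hS : 0 < S) (m : ℝ) (hm : 0 < m) :
    let Q := ∫ x in Set.Ioi m, gaussianPDFReal 0 S.toNNReal x
    let A := gaussianPDFReal 0 S.toNNReal m * (S / m - S ^ 2 / m ^ 3 + 3 * S ^ 3 / m ^ 5)
    Q ≤ A ∧ A ≤ Q * (1 + 15 * S ^ 3 / m ^ 6) := by
  intro Q A
  set p := gaussianPDFReal 0 S.toNNReal with hp
  have p0 : ∀ x, 0 ≤ p x := gaussianPDFReal_nonneg _ _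
  have i0 : IntegrableOn p (Set.Ioi m) :=
    (integrable_gaussianPDFReal 0 S.toNNReal).integrableOn
  have hd : ∀ x ∈ Set.Ici m, HasDerivAt
      (fun x => -(p x * (S / x - S ^ 2 / x ^ 3 + 3 * S ^ 3 / x ^ 5)))
      (p x * (1 + 15 * S ^ 3 / x ^ 6)) x := by
    intro x hx
    have hx0 : 0 < x := lt_of_lt_of_le hm hx
    have d1 : HasDerivAt (fun x : ℝ => S / x - S ^ 2 / x ^ 3 + 3 * S ^ 3 / x ^ 5)
        (-S / x ^ 2 + 3 * S ^ 2 / x ^ 4 - 15 * S ^ 3 / x ^ 6) x := by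
      have e1 := (hasDerivAt_const x S).div (hasDerivAt_id x) hx0.ne'
      have e2 := (hasDerivAt_const x (S ^ 2)).div (hasDerivAt_pow 3 x) (by positivity)
      have e3 := (hasDerivAt_const x (3 * S ^ 3)).div (hasDerivAt_pow 5 x) (by positivity)
      refine ((e1.sub e2).add e3).congr_deriv ?_
      simp only [id]
      field_simp
      push_cast
      ring
    refine (((pdf_deriv_aux S hS x).mul d1).neg).congr_deriv ?_
    rw [← hp]
    field_simp
    ring
  have ht : Tendsto (fun x => -(p x * (S / x - S ^ 2 / x ^ 3 + 3 * S ^ 3 / x ^ 5)))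
      atTop (nhds 0) := by
    have t0 : Tendsto p atTop (nhds 0) := by simpa using pdf_tendsto_aux S hS 0
    have t1 : Tendsto (fun x : ℝ => S / x) atTop (nhds 0) := tendsto_id.const_div_atTop S
    have t2 : Tendsto (fun x : ℝ => S ^ 2 / x ^ 3) atTop (nhds 0) :=
      (tendsto_pow_atTop (by norm_num)).const_div_atTop _
    have t3 : Tendsto (fun x : ℝ => 3 * S ^ 3 / x ^ 5) atTop (nhds 0) :=
      (tendsto_pow_atTop (by norm_num)).const_div_atTop _
    simpa using (t0.mul ((t1.sub t2).add t3)).neg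
  have hpos : ∀ x ∈ Set.Ioi m, 0 ≤ p x * (1 + 15 * S ^ 3 / x ^ 6) := by
    intro x hx
    have hx0 : 0 < x := lt_trans hm hx
    have := p0 x
    positivity
  have ii := integrableOn_Ioi_deriv_of_nonneg' hd hpos ht
  have hA : A = ∫ x in Set.Ioi m, p x * (1 + 15 * S ^ 3 / x ^ 6) := by
    rw [integral_Ioi_of_hasDerivAt_of_tendsto' hd ii ht]
    simp [A, p]
  rw [hA]
  constructor
  · refine setIntegral_mono_on i0 ii measurableSet_Ioi fun x hx => ?_
    have hx0 : 0 < x := lt_trans hm hx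
    have : 0 ≤ 15 * S ^ 3 / x ^ 6 := by positivity
    nlinarith [p0 x]
  · rw [← integral_mul_const]
    refine setIntegral_mono_on ii (i0.mul_const _) measurableSet_Ioi fun x hx => ?_
    have hx0 : m < x := hx
    have := p0 x
    gcongr

lemma alg_aux (S m D : ℝ) (hS : 0 < S) (hm : 0 < m) (hmS : S ≤ m ^ 2)
    (h1 : m ^ 2 ≤ D * (1 - S / m ^ 2 + 3 * (S / m ^ 2) ^ 2))
    (h2 : D * (1 - S / m ^ 2 + 3 * (S / m ^ 2) ^ 2) ≤ m ^ 2 * (1 + 15 * (S / m ^ 2) ^ 3)) :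
    |D - (m ^ 2 + S - 2 * S ^ 2 / m ^ 2)| ≤ 32 * S ^ 3 / m ^ 4 := by
  obtain ⟨y, hy⟩ : ∃ y, y = S / m ^ 2 := ⟨_, rfl⟩
  rw [← hy] at h1 h2
  have hy0 : 0 < y := by rw [hy]; positivity
  have hy1 : y ≤ 1 := by rw [hy]; exact (div_le_one (by positivity)).2 hmS
  have hSy : S = y * m ^ 2 := by rw [hy]; field_simp
  have e1 : m ^ 2 + S - 2 * S ^ 2 / m ^ 2 = m ^ 2 * (1 + y - 2 * y ^ 2) := by
    rw [hSy]; field_simp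
  have e2 : 32 * S ^ 3 / m ^ 4 = 32 * (m ^ 2 * y ^ 3) := by
    rw [hSy]; field_simp
  rw [e1, e2]
  set k := 1 - y + 3 * y ^ 2 with hk
  have hk2 : 1 / 2 ≤ k := by nlinarith [sq_nonneg (y - 1 / 6)]
  set E := D - m ^ 2 * (1 + y - 2 * y ^ 2) with hE
  have e3 : E * k = D * k - m ^ 2 * (1 + 5 * y ^ 3 - 6 * y ^ 4) := by
    rw [hE, hk]; ring
  have m2 : 0 < m ^ 2 := by positivity
  have y3 : 0 < m ^ 2 * y ^ 3 := by positivity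
  have y4 : m ^ 2 * y ^ 4 ≤ m ^ 2 * y ^ 3 := by
    have : m ^ 2 * y ^ 4 = m ^ 2 * y ^ 3 * y := by ring
    nlinarith
  have y40 : 0 < m ^ 2 * y ^ 4 := by positivity
  have b1 : E * k ≤ 16 * (m ^ 2 * y ^ 3) := by nlinarith
  have b2 : -(16 * (m ^ 2 * y ^ 3)) ≤ E * k := by nlinarith
  rw [abs_le]
  constructor
  · by_contra! hh
    nlinarith
  · by_contra! hh
    nlinarith

lemma tail_expansion_aux (S : ℝ) (hS : 0 < S) (m : ℝ) (hm : 0 < m) (hmS : S ≤ m ^ 2)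
    (hQ : 0 < ∫ x in Set.Ioi m, gaussianPDFReal 0 S.toNNReal x) :
    |(∫ x in Set.Ioi m, x ^ 2 * gaussianPDFReal 0 S.toNNReal x) /
      (∫ x in Set.Ioi m, gaussianPDFReal 0 S.toNNReal x)
      - (m ^ 2 + 2 * S - 2 * S ^ 2 / m ^ 2)| ≤ 32 * S ^ 3 / m ^ 4 := by
  obtain ⟨h1, h2⟩ := tail_bounds_aux S hS m hm
  rw [tail_sq_aux S hS]
  set Q := ∫ x in Set.Ioi m, gaussianPDFReal 0 S.toNNReal x
  set p := gaussianPDFReal 0 S.toNNReal m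
  have e : m * S * p / Q * (1 - S / m ^ 2 + 3 * (S / m ^ 2) ^ 2) =
      m ^ 2 * (p * (S / m - S ^ 2 / m ^ 3 + 3 * S ^ 3 / m ^ 5)) / Q := by
    field_simp
  have := alg_aux S m (m * S * p / Q) hS hm hmS
    (by rw [e, le_div_iff₀ hQ]; gcongr)
    (by
      rw [e, div_le_iff₀ hQ]
      have e' : m ^ 2 * (1 + 15 * (S / m ^ 2) ^ 3) * Q = m ^ 2 * (Q * (1 + 15 * S ^ 3 / m ^ 6)) := by
        field_simp
      rw [e']; gcongr)
  convert this using 2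
  field_simp
  ring

theorem gaussian_condExp_sq_expansion {Ω : Type*} [MeasureSpace Ω] [IsProbabilityMeasure (ℙ : Measure Ω)]
    (G ξ : Ω → ℝ) (hG : Measurable G) (hξ : Measurable ξ)
    (a b c : ℝ) (ha : 0 < a) (hb : 0 < b) (hc : |c| < Real.sqrt (a * b))
    (hlaw : ∀ u v : ℝ, Measure.map (fun ω => u * G ω + v * ξ ω) ℙ =
      gaussianReal 0 (Real.toNNReal (u ^ 2 * a + 2 * u * v * c + v ^ 2 * b))) :
    (fun m : ℝ => condExpEvent (fun ω => G ω ^ 2) {ω | m < G ω + ξ ω} -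
        ((a + c) ^ 2 / (a + b + 2 * c) ^ 2 * m ^ 2 + (a + c) ^ 2 / (a + b + 2 * c) + a
          - 2 * (a + c) ^ 2 / m ^ 2))
      =o[atTop] (fun m : ℝ => m ^ (-(2 : ℤ))) := by
  have hc2 : c ^ 2 < a * b := by
    have h := Real.lt_sqrt (abs_nonneg c) |>.1 hc
    rwa [sq_abs] at h
  have hqf : ∀ u v : ℝ, 0 ≤ u ^ 2 * a + 2 * u * v * c + v ^ 2 * b := by
    intro u v
    have : 0 ≤ a * (u ^ 2 * a + 2 * u * v * c + v ^ 2 * b) := by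
      nlinarith [sq_nonneg (a * u + c * v), mul_nonneg (sq_nonneg v) (sub_nonneg.2 hc2.le)]
    exact nonneg_of_mul_nonneg_right this ha
  obtain ⟨S, hSdef⟩ : ∃ S, S = a + b + 2 * c := ⟨_, rfl⟩
  have hS : 0 < S := by
    have : 0 < a * S := by rw [hSdef]; nlinarith [sq_nonneg (a + c)]
    exact pos_of_mul_pos_right this ha.le
  -- linear combinations
  have hmeas : ∀ u v : ℝ, Measurable (fun ω => u * G ω + v * ξ ω) := fun u v => by fun_prop
  have hmem : ∀ u v : ℝ, MemLp (fun ω => u * G ω + v * ξ ω) 2 (ℙ : Measure Ω) := by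
    intro u v
    have h := memLp_id_gaussianReal' (μ := 0)
      (v := Real.toNNReal (u ^ 2 * a + 2 * u * v * c + v ^ 2 * b)) 2 (by simp)
    rw [← hlaw u v] at h
    exact (memLp_map_measure_iff (by fun_prop) (hmeas u v).aemeasurable).1 h
  have hmean : ∀ u v : ℝ, ∫ ω, (u * G ω + v * ξ ω) = 0 := by
    intro u v
    have h := integral_id_gaussianReal (μ := 0)
      (v := Real.toNNReal (u ^ 2 * a + 2 * u * v * c + v ^ 2 * b))
    rw [← hlaw u v, integral_map (hmeas u v).aemeasurable (by fun_prop)] at h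
    exact h
  have hvar : ∀ u v : ℝ, Var[fun ω => u * G ω + v * ξ ω; ℙ] =
      u ^ 2 * a + 2 * u * v * c + v ^ 2 * b := by
    intro u v
    have h := variance_fun_id_gaussianReal (μ := 0)
      (v := Real.toNNReal (u ^ 2 * a + 2 * u * v * c + v ^ 2 * b))
    rw [← hlaw u v, variance_map (by fun_prop) (hmeas u v).aemeasurable,
      Real.coe_toNNReal _ (hqf u v)] at h
    exact h
  obtain ⟨r, hr⟩ : ∃ r, r = (a + c) / S := ⟨_, rfl⟩
  have hrS : r * S = a + c := by rw [hr]; field_simp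
  set M : Ω → ℝ := fun ω => 1 * G ω + 1 * ξ ω with hM
  set R : Ω → ℝ := fun ω => (1 - r) * G ω + (-r) * ξ ω with hR
  have hGMR : ∀ ω, G ω = r * M ω + R ω := fun ω => by simp only [hM, hR]; ring
  have hMm : Measurable M := hmeas 1 1
  have hRm : Measurable R := hmeas _ _
  have hjoint : HasGaussianLaw (fun ω => (M ω, R ω)) ℙ := by
    constructor
    refine isGaussian_of_map_eq_gaussianReal fun L => ?_
    rw [Measure.map_map (by fun_prop) (by fun_prop)]
    refine ⟨0, _, Eq.trans ?_ (hlaw (L (1, 0) + L (0, 1) * (1 - r)) (L (1, 0) - L (0, 1) * r))⟩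
    · congr 1
      ext ω
      have : (M ω, R ω) = M ω • ((1 : ℝ), (0 : ℝ)) + R ω • ((0 : ℝ), (1 : ℝ)) := by simp
      simp only [Function.comp]
      rw [this, map_add, map_smul, map_smul]
      simp only [smul_eq_mul, hM, hR]
      ring
  have hVR : Var[R; ℙ] = a - (a + c) ^ 2 / S := by
    rw [hR, hvar, ← hrS]
    field_simp
    linear_combination (r ^ 2) * (-hSdef) + 2 * r * hrS
  have hcov : cov[M, R; ℙ] = 0 := by
    have h := variance_add (hmem 1 1) (hmem (1 - r) (-r))
    have h2 : (fun ω => 1 * G ω + 1 * ξ ω) + (fun ω => (1 - r) * G ω + (-r) * ξ ω)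
        = fun ω => (1 + (1 - r)) * G ω + (1 + -r) * ξ ω := by
      ext ω; simp only [Pi.add_apply]; ring
    rw [h2, hvar, hvar, hvar] at h
    change _ = _ + 2 * cov[M, R; ℙ] + _ at h
    linear_combination (-1 / 2) * h - hrS + r * hSdef
  have hind : IndepFun M R ℙ := hjoint.indepFun_of_covariance_eq_zero hcov
  have hlawM : Measure.map M ℙ = gaussianReal 0 S.toNNReal := by
    rw [hM, hlaw, hSdef]; congr 2; ring
  have hv0 : S.toNNReal ≠ 0 := by simpa using hS
  have hR2 : ∫ ω, R ω ^ 2 = a - (a + c) ^ 2 / S := by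
    rw [← hVR, variance_of_integral_eq_zero hRm.aemeasurable (hmean _ _)]
  have hMemM : MemLp M 2 (ℙ : Measure Ω) := hmem 1 1
  have hMemR : MemLp R 2 (ℙ : Measure Ω) := hmem _ _
  have key : ∀ m : ℝ, condExpEvent (fun ω => G ω ^ 2) {ω | m < G ω + ξ ω} =
      r ^ 2 * ((∫ x in Set.Ioi m, x ^ 2 * gaussianPDFReal 0 S.toNNReal x) /
      (∫ x in Set.Ioi m, gaussianPDFReal 0 S.toNNReal x)) + (a - (a + c) ^ 2 / S) ∧
      0 < ∫ x in Set.Ioi m, gaussianPDFReal 0 S.toNNReal x := by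
    intro m
    have hset : {ω | m < G ω + ξ ω} = M ⁻¹' Set.Ioi m := by
      ext ω; simp [hM]
    have hsm : MeasurableSet (M ⁻¹' Set.Ioi m) := hMm measurableSet_Ioi
    have hQ0 : 0 ≤ ∫ x in Set.Ioi m, gaussianPDFReal 0 S.toNNReal x :=
      integral_nonneg fun x => gaussianPDFReal_nonneg _ _ _
    have hP : ℙ (M ⁻¹' Set.Ioi m) =
        ENNReal.ofReal (∫ x in Set.Ioi m, gaussianPDFReal 0 S.toNNReal x) := by
      rw [← Measure.map_apply hMm measurableSet_Ioi, hlawM,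
        gaussianReal_apply_eq_integral 0 hv0]
    have hQ : 0 < ∫ x in Set.Ioi m, gaussianPDFReal 0 S.toNNReal x := by
      rw [setIntegral_pos_iff_support_of_nonneg_ae
        (ae_of_all _ fun x => gaussianPDFReal_nonneg _ _ _)
        (integrable_gaussianPDFReal 0 S.toNNReal).integrableOn]
      have : Function.support (gaussianPDFReal 0 S.toNNReal) = Set.univ := by
        ext x; simp [(gaussianPDFReal_pos 0 _ x hv0).ne']
      rw [this]; simp
    refine ⟨?_, hQ⟩
    have hM2 : ∫ ω in M ⁻¹' Set.Ioi m, M ω ^ 2 =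
        ∫ x in Set.Ioi m, x ^ 2 * gaussianPDFReal 0 S.toNNReal x := by
      rw [← setIntegral_map (f := fun x : ℝ => x ^ 2) measurableSet_Ioi (by fun_prop)
        hMm.aemeasurable, hlawM, ← integral_indicator measurableSet_Ioi,
        integral_gaussianReal_eq_integral_smul hv0, ← integral_indicator measurableSet_Ioi]
      congr 1
      ext x
      by_cases hx : x ∈ Set.Ioi m <;> simp [hx, mul_comm]
    have hMR : ∫ ω in M ⁻¹' Set.Ioi m, M ω * R ω = 0 := by
      have h := (hind.comp (φ := (Set.Ioi m).indicator fun x => x) (ψ := fun x => x)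
        (measurable_id.indicator measurableSet_Ioi)
        measurable_id).integral_fun_mul_eq_mul_integral
        ((measurable_id.indicator measurableSet_Ioi).comp hMm).aestronglyMeasurable
        hRm.aestronglyMeasurable
      have h0 : ∫ ω, R ω = 0 := hmean _ _
      rw [← integral_indicator hsm]
      have h1 : ∫ ω, ((fun x : ℝ => x) ∘ R) ω = 0 := h0
      rw [h1, mul_zero] at h
      rw [← h]
      congr 1
      ext ω
      by_cases hx : m < M ω <;> simp [Set.indicator, hx]
    have hRR : ∫ ω in M ⁻¹' Set.Ioi m, R ω ^ 2 =
        (∫ x in Set.Ioi m, gaussianPDFReal 0 S.toNNReal x) * (a - (a + c) ^ 2 / S) := by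
      have h := (hind.comp (φ := (Set.Ioi m).indicator fun _ => (1 : ℝ)) (ψ := fun x => x ^ 2)
        (measurable_const.indicator measurableSet_Ioi)
        (by fun_prop)).integral_fun_mul_eq_mul_integral
        ((measurable_const.indicator measurableSet_Ioi).comp hMm).aestronglyMeasurable
        (hRm.pow_const 2).aestronglyMeasurable
      have h1 : ∫ ω, ((fun x : ℝ => x ^ 2) ∘ R) ω = a - (a + c) ^ 2 / S := hR2
      have h2 : ∫ ω, ((Set.Ioi m).indicator (fun _ => (1 : ℝ)) ∘ M) ω =
          ∫ x in Set.Ioi m, gaussianPDFReal 0 S.toNNReal x := by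
        have : ((Set.Ioi m).indicator (fun _ => (1 : ℝ)) ∘ M) =
          (M ⁻¹' Set.Ioi m).indicator (fun _ => (1 : ℝ)) := by
          ext ω; simp [Set.indicator]
        rw [this, integral_indicator hsm, setIntegral_const, Measure.real, hP,
          ENNReal.toReal_ofReal hQ0]
        simp
      rw [h1, h2] at h
      rw [← h, ← integral_indicator hsm]
      congr 1
      ext ω
      by_cases hx : m < M ω <;> simp [Set.indicator, hx]
    have hnum : ∫ ω in M ⁻¹' Set.Ioi m, G ω ^ 2 =
        r ^ 2 * (∫ ω in M ⁻¹' Set.Ioi m, M ω ^ 2) +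
        2 * r * (∫ ω in M ⁻¹' Set.Ioi m, M ω * R ω) + ∫ ω in M ⁻¹' Set.Ioi m, R ω ^ 2 := by
      have i1 : Integrable (fun ω => r ^ 2 * M ω ^ 2) ((ℙ : Measure Ω).restrict (M ⁻¹' Set.Ioi m)) :=
        (hMemM.integrable_sq.const_mul _).integrableOn
      have i2 : Integrable (fun ω => 2 * r * (M ω * R ω)) ((ℙ : Measure Ω).restrict (M ⁻¹' Set.Ioi m)) :=
        ((hMemM.integrable_mul hMemR).const_mul _).integrableOn
      have i3 : Integrable (fun ω => R ω ^ 2) ((ℙ : Measure Ω).restrict (M ⁻¹' Set.Ioi m)) :=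
        hMemR.integrable_sq.integrableOn
      have i12 : Integrable (fun ω => r ^ 2 * M ω ^ 2 + 2 * r * (M ω * R ω))
          ((ℙ : Measure Ω).restrict (M ⁻¹' Set.Ioi m)) := i1.add i2
      rw [← integral_const_mul, ← integral_const_mul, ← integral_add i1 i2,
        ← integral_add i12 i3]
      congr 1
      ext ω
      rw [hGMR ω]
      ring
    rw [condExpEvent, hset, hnum, hMR, hM2, hRR, hP, ENNReal.toReal_ofReal hQ0]
    field_simp
    ring
  -- conclusion
  have hO : (fun m : ℝ => condExpEvent (fun ω => G ω ^ 2) {ω | m < G ω + ξ ω} -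
        ((a + c) ^ 2 / (a + b + 2 * c) ^ 2 * m ^ 2 + (a + c) ^ 2 / (a + b + 2 * c) + a
          - 2 * (a + c) ^ 2 / m ^ 2))
      =O[atTop] (fun m : ℝ => m ^ (-(4 : ℤ))) := by
    refine IsBigO.of_bound (r ^ 2 * (32 * S ^ 3)) ?_
    filter_upwards [eventually_gt_atTop 0,
      (tendsto_pow_atTop (α := ℝ) (n := 2) (by norm_num)).eventually_ge_atTop S] with m hm hmS
    obtain ⟨hk, hQ⟩ := key m
    have ht := tail_expansion_aux S hS m hm hmS hQ
    rw [hk, ← hSdef]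
    set T := (∫ x in Set.Ioi m, x ^ 2 * gaussianPDFReal 0 S.toNNReal x) /
      (∫ x in Set.Ioi m, gaussianPDFReal 0 S.toNNReal x)
    have e : r ^ 2 * T + (a - (a + c) ^ 2 / S) - ((a + c) ^ 2 / S ^ 2 * m ^ 2 + (a + c) ^ 2 / S + a
          - 2 * (a + c) ^ 2 / m ^ 2) = r ^ 2 * (T - (m ^ 2 + 2 * S - 2 * S ^ 2 / m ^ 2)) := by
      rw [← hrS]
      field_simp
      ring
    rw [e, norm_mul, Real.norm_eq_abs, Real.norm_eq_abs, Real.norm_eq_abs, abs_of_nonneg (sq_nonneg r),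
      abs_of_nonneg (by positivity : (0:ℝ) ≤ m ^ (-(4:ℤ))), mul_assoc]
    gcongr
    rw [zpow_neg, ← div_eq_mul_inv]
    exact_mod_cast ht
  refine hO.trans_isLittleO ?_
  refine (isLittleO_iff_tendsto' ?_).2 ?_
  · filter_upwards [eventually_gt_atTop 0] with m hm h
    exact absurd h (by positivity)
  · have : Tendsto (fun m : ℝ => 1 / m ^ 2) atTop (nhds 0) :=
      (tendsto_pow_atTop (by norm_num)).const_div_atTop 1
    refine this.congr' ?_
    filter_upwards [eventually_gt_atTop 0] with m hm
    rw [zpow_neg, zpow_neg]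
    have e4 : m ^ (4:ℤ) = m ^ 4 := by norm_cast
    have e2 : m ^ (2:ℤ) = m ^ 2 := by norm_cast
    rw [e4, e2]
    field_simp
end

section
/- Let (G, ξ) be a centered bivariate Gaussian vector with covariance matrix [[a, c], [c, b]], a, b > 0, |c| < √(ab), and M = G + ξ. Then as m → ∞, E[Gξ | M > m] = ((a+c)(b+c)/(a+b+2c)²)·m² + (a+c)(b+c)/(a+b+2c) + c - 2(a+c)(b+c)/m² + o(m⁻²). -/
open MeasureTheory ProbabilityTheory Filter Asymptotics Real

open scoped NNReal

lemma aux_hasDerivAt_pdf (v : ℝ≥0) (hv : v ≠ 0) (x : ℝ) :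
    HasDerivAt (gaussianPDFReal 0 v) (-(x / v) * gaussianPDFReal 0 v x) x := by
  have hv' : (v : ℝ) ≠ 0 := by exact_mod_cast hv
  have h1 : HasDerivAt (fun y : ℝ => -(y - 0) ^ 2 / (2 * (v : ℝ))) (-(x / v)) x := by
    have := ((((hasDerivAt_id x).sub_const 0).pow 2).neg).div_const (2 * (v : ℝ))
    refine HasDerivAt.congr_deriv this ?_
    simp
    field_simp
  have h2 := (h1.exp).const_mul ((√(2 * π * v))⁻¹)
  rw [gaussianPDFReal_def]
  refine HasDerivAt.congr_deriv h2 ?_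
  ring

lemma aux_tendsto_mul_pdf (v : ℝ≥0) (hv : v ≠ 0) :
    Tendsto (fun x => x * gaussianPDFReal 0 v x) atTop (nhds 0) := by
  have hv' : 0 < (v : ℝ) := by positivity
  have h := (tendsto_rpow_abs_mul_exp_neg_mul_sq_cocompact (a := 1 / (2 * (v : ℝ))) (by positivity) 1)
  have h2 := (h.mono_left atTop_le_cocompact).const_mul ((√(2 * π * v))⁻¹)
  rw [mul_zero] at h2
  refine h2.congr' ?_
  filter_upwards [eventually_gt_atTop 0] with x hx
  rw [gaussianPDFReal_def, abs_of_pos hx, rpow_one]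
  have : -(x - 0) ^ 2 / (2 * (v : ℝ)) = -(1 / (2 * (v : ℝ))) * x ^ 2 := by ring
  simp only [this]
  ring

lemma aux_tail_sq (v : ℝ≥0) (hv : v ≠ 0) (m : ℝ) :
    ∫ x in Set.Ioi m, x ^ 2 * gaussianPDFReal 0 v x
      = v * m * gaussianPDFReal 0 v m + v * ∫ x in Set.Ioi m, gaussianPDFReal 0 v x := by
  have hv' : 0 < (v : ℝ) := by positivity
  have hi : Integrable (fun x => x ^ 2 * gaussianPDFReal 0 v x) := by
    have := (integrable_rpow_mul_exp_neg_mul_sq (b := 1 / (2 * (v : ℝ))) (by positivity)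
      (s := 2) (by norm_num)).const_mul ((√(2 * π * v))⁻¹)
    refine this.congr (Eventually.of_forall fun x => ?_)
    have e : -(x - 0) ^ 2 / (2 * (v : ℝ)) = -(1 / (2 * (v : ℝ))) * x ^ 2 := by ring
    simp only [gaussianPDFReal_def, e]
    norm_cast
    ring
  have hf := integrable_gaussianPDFReal 0 v
  have key := integral_Ioi_of_hasDerivAt_of_tendsto' (a := m)
    (f := fun x => -(v : ℝ) * (x * gaussianPDFReal 0 v x))
    (f' := fun x => x ^ 2 * gaussianPDFReal 0 v x - v * gaussianPDFReal 0 v x) (m := -(v : ℝ) * 0)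
    (fun x _ => by
      have := ((hasDerivAt_id x).mul (aux_hasDerivAt_pdf v hv x)).const_mul (-(v : ℝ))
      refine HasDerivAt.congr_deriv this ?_
      simp
      field_simp
      ring)
    ((hi.sub (hf.const_mul _)).integrableOn)
    ((aux_tendsto_mul_pdf v hv).const_mul _)
  rw [integral_sub hi.integrableOn (hf.const_mul _).integrableOn, integral_const_mul] at key
  linarith

lemma aux_tail_bounds (v : ℝ≥0) (hv : v ≠ 0) (m : ℝ) (hm : 0 < m) :
    ∃ δ : ℝ, 0 ≤ δ ∧ δ ≤ 15 * (v / m ^ 2) ^ 3 ∧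
    ∫ x in Set.Ioi m, gaussianPDFReal 0 v x =
      gaussianPDFReal 0 v m * (v / m) * (1 - v / m ^ 2 + 3 * (v / m ^ 2) ^ 2 - δ) := by
  have hv' : 0 < (v : ℝ) := by positivity
  set f := gaussianPDFReal 0 v with hfdef
  have hfpos : ∀ x, 0 < f x := fun x => gaussianPDFReal_pos 0 v x hv
  have hf : Integrable f := integrable_gaussianPDFReal 0 v
  have ht : Tendsto (fun x => x * f x) atTop (nhds 0) := aux_tendsto_mul_pdf v hv
  have hinv : Tendsto (fun x : ℝ => x⁻¹) atTop (nhds 0) := tendsto_inv_atTop_zero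
  set U : ℝ → ℝ := fun x => f x * (v * x⁻¹ - v ^ 2 * (x⁻¹) ^ 3 + 3 * v ^ 3 * (x⁻¹) ^ 5) with hU
  set K : ℝ → ℝ := fun x => f x * (15 * v ^ 4 * (x⁻¹) ^ 7) with hK
  have tU : Tendsto U atTop (nhds 0) := by
    have h := ht.mul ((((hinv.pow 2).const_mul (v : ℝ)).sub ((hinv.pow 4).const_mul ((v : ℝ) ^ 2))).add
      ((hinv.pow 6).const_mul (3 * (v : ℝ) ^ 3)))
    rw [zero_mul] at h
    refine h.congr' ?_
    filter_upwards [eventually_gt_atTop 0] with x hx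
    simp only [hU]
    field_simp
  have tK : Tendsto K atTop (nhds 0) := by
    have h := ht.mul ((hinv.pow 8).const_mul (15 * (v : ℝ) ^ 4))
    rw [zero_mul] at h
    refine h.congr' ?_
    filter_upwards [eventually_gt_atTop 0] with x hx
    simp only [hK]
    field_simp
  have dU : ∀ x ∈ Set.Ici m, HasDerivAt U (-(f x * (1 + 15 * v ^ 3 / x ^ 6))) x := by
    intro x hx
    have hx0 : x ≠ 0 := (lt_of_lt_of_le hm hx).ne'
    have hi := hasDerivAt_inv hx0
    have := (aux_hasDerivAt_pdf v hv x).mul (((hi.const_mul (v : ℝ)).sub ((hi.pow 3).const_mul ((v : ℝ) ^ 2))).add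
      ((hi.pow 5).const_mul (3 * (v : ℝ) ^ 3)))
    refine HasDerivAt.congr_deriv this ?_
    simp [← hfdef]
    field_simp
    ring
  have dK : ∀ x ∈ Set.Ici m, HasDerivAt K (-(f x * (15 * v ^ 3 / x ^ 6 + 105 * v ^ 4 / x ^ 8))) x := by
    intro x hx
    have hx0 : x ≠ 0 := (lt_of_lt_of_le hm hx).ne'
    have hi := hasDerivAt_inv hx0
    have := (aux_hasDerivAt_pdf v hv x).mul ((hi.pow 7).const_mul (15 * (v : ℝ) ^ 4))
    refine HasDerivAt.congr_deriv this ?_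
    simp [← hfdef]
    field_simp
    ring
  have nU : ∀ x ∈ Set.Ioi m, -(f x * (1 + 15 * v ^ 3 / x ^ 6)) ≤ 0 := fun x hx => by
    have := hfpos x
    have : 0 < x := hm.trans hx
    rw [neg_nonpos]; positivity
  have nK : ∀ x ∈ Set.Ioi m, -(f x * (15 * v ^ 3 / x ^ 6 + 105 * v ^ 4 / x ^ 8)) ≤ 0 := fun x hx => by
    have := hfpos x
    have : 0 < x := hm.trans hx
    rw [neg_nonpos]; positivity
  have iU := integrableOn_Ioi_deriv_of_nonpos' dU nU tU
  have iK := integrableOn_Ioi_deriv_of_nonpos' dK nK tK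
  have eU := integral_Ioi_of_hasDerivAt_of_nonpos' dU nU tU
  have eK := integral_Ioi_of_hasDerivAt_of_nonpos' dK nK tK
  have b1 : ∫ x in Set.Ioi m, f x ≤ U m := by
    have : ∫ x in Set.Ioi m, f x ≤ ∫ x in Set.Ioi m, -(-(f x * (1 + 15 * v ^ 3 / x ^ 6))) := by
      refine setIntegral_mono_on hf.integrableOn iU.neg measurableSet_Ioi fun x hx => ?_
      have h1 := hfpos x
      have : 0 < x := hm.trans hx
      have : 0 ≤ f x * (15 * v ^ 3 / x ^ 6) := by positivity
      linarith
    rw [integral_neg, eU] at this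
    linarith
  have b2 : U m - K m ≤ ∫ x in Set.Ioi m, f x := by
    have : ∫ x in Set.Ioi m, (-(-(f x * (1 + 15 * v ^ 3 / x ^ 6))) - f x) ≤
        ∫ x in Set.Ioi m, -(-(f x * (15 * v ^ 3 / x ^ 6 + 105 * v ^ 4 / x ^ 8))) := by
      refine setIntegral_mono_on (iU.neg.sub hf.integrableOn) iK.neg measurableSet_Ioi fun x hx => ?_
      have h1 := hfpos x
      have : 0 < x := hm.trans hx
      have : 0 ≤ f x * (105 * v ^ 4 / x ^ 8) := by positivity
      linarith
    rw [integral_sub (f := fun x => -(-(f x * (1 + 15 * v ^ 3 / x ^ 6)))) iU.neg hf.integrableOn] at this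
    simp only [integral_neg] at this eU eK
    linarith
  have hP : 0 < f m * (v / m) := by have := hfpos m; positivity
  refine ⟨(U m - ∫ x in Set.Ioi m, f x) / (f m * (v / m)), ?_, ?_, ?_⟩
  · apply div_nonneg _ hP.le
    linarith
  · rw [div_le_iff₀ hP]
    have : K m = 15 * (v / m ^ 2) ^ 3 * (f m * (v / m)) := by
      simp only [hK]; field_simp
    linarith
  · rw [mul_sub, mul_div_cancel₀ _ hP.ne']
    have : U m = f m * (v / m) * (1 - v / m ^ 2 + 3 * (v / m ^ 2) ^ 2) := by
      simp only [hU]; field_simp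
    linarith

/-- the algebraic expansion -/
lemma aux_expansion (s : ℝ) (hs : 0 < s) (q : ℝ → ℝ)
    (hq : ∀ m, 0 < m → ∃ δ : ℝ, 0 ≤ δ ∧ δ ≤ 15 * (s / m ^ 2) ^ 3 ∧
      q m = s / m * (1 - s / m ^ 2 + 3 * (s / m ^ 2) ^ 2 - δ)) :
    (fun m : ℝ => s * m / q m - (m ^ 2 + s - 2 * s ^ 2 / m ^ 2)) =o[atTop]
      (fun m : ℝ => m ^ (-(2 : ℤ))) := by
  have hO : (fun m : ℝ => s * m / q m - (m ^ 2 + s - 2 * s ^ 2 / m ^ 2)) =O[atTop]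
      (fun m : ℝ => (m⁻¹) ^ 4) := by
    have ht : Tendsto (fun m : ℝ => s / m ^ 2) atTop (nhds 0) :=
      Tendsto.div_atTop tendsto_const_nhds (tendsto_pow_atTop (by norm_num))
    refine IsBigO.of_bound (200 * s ^ 3) ?_
    filter_upwards [eventually_gt_atTop 0, ht.eventually (gt_mem_nhds (show (0 : ℝ) < 1 / 10 by norm_num))]
      with m hm hsm
    obtain ⟨δ, h0, h1, h2⟩ := hq m hm
    set t := s / m ^ 2 with htd
    have ht0 : 0 < t := by positivity
    have hst : s = t * m ^ 2 := by rw [htd]; field_simp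
    have ht2 : t ^ 2 ≤ 1 / 100 := by nlinarith
    have ht3 : t ^ 3 ≤ 1 / 1000 := by nlinarith [mul_pos ht0 ht0]
    have hD : 1 / 2 ≤ 1 - t + 3 * t ^ 2 - δ := by nlinarith
    have hD0 : 0 < 1 - t + 3 * t ^ 2 - δ := by linarith
    have e : s * m / q m - (m ^ 2 + s - 2 * s ^ 2 / m ^ 2) =
        m ^ 2 * ((- 5 * t ^ 3 + 6 * t ^ 4 + δ * (1 + t - 2 * t ^ 2)) / (1 - t + 3 * t ^ 2 - δ)) := by
      rw [h2]
      clear_value t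
      rw [hst]
      rw [show t * m ^ 2 * m / (t * m ^ 2 / m * (1 - t + 3 * t ^ 2 - δ)) = m ^ 2 / (1 - t + 3 * t ^ 2 - δ) by
        field_simp, show m ^ 2 + t * m ^ 2 - 2 * (t * m ^ 2) ^ 2 / m ^ 2 = m ^ 2 * (1 + t - 2 * t ^ 2) by
        field_simp, ← mul_div_assoc, eq_div_iff hD0.ne', sub_mul, div_mul_cancel₀ _ hD0.ne']
      ring
    rw [e, norm_mul, norm_div, Real.norm_eq_abs, Real.norm_eq_abs, Real.norm_eq_abs, Real.norm_eq_abs,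
      abs_of_pos hD0, abs_of_pos (by positivity : 0 < m ^ 2), abs_of_pos (by positivity : 0 < (m⁻¹) ^ 4)]
    have hb : |(- 5 * t ^ 3 + 6 * t ^ 4 + δ * (1 + t - 2 * t ^ 2))| ≤ 100 * t ^ 3 := by
      have p3 : 0 < t ^ 3 := by positivity
      have p4 : t ^ 4 ≤ t ^ 3 := by nlinarith
      have p4' : 0 < t ^ 4 := by positivity
      have hw : 1 + t - 2 * t ^ 2 ≤ 2 := by nlinarith
      have hw' : 0 ≤ 1 + t - 2 * t ^ 2 := by nlinarith
      have := mul_le_mul_of_nonneg_left hw h0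
      have := mul_nonneg h0 hw'
      rw [abs_le]; constructor <;> linarith
    have : |(- 5 * t ^ 3 + 6 * t ^ 4 + δ * (1 + t - 2 * t ^ 2))| / (1 - t + 3 * t ^ 2 - δ) ≤ 200 * t ^ 3 := by
      rw [div_le_iff₀ hD0]
      have p3 : 0 < t ^ 3 := by positivity
      nlinarith
    calc _ ≤ m ^ 2 * (200 * t ^ 3) := by gcongr
      _ = 200 * s ^ 3 * (m⁻¹) ^ 4 := by rw [htd]; field_simp
  refine hO.trans_isLittleO ?_
  refine (isLittleO_of_tendsto' (f := fun m : ℝ => (m⁻¹) ^ 4) (g := fun m : ℝ => m ^ (-(2 : ℤ))) ?_ ?_)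
  · filter_upwards [eventually_gt_atTop 0] with m hm h
    exact absurd h (by positivity)
  · have : Tendsto (fun m : ℝ => (m⁻¹) ^ 2) atTop (nhds 0) := by
      simpa using (tendsto_inv_atTop_zero (𝕜 := ℝ)).pow 2
    refine this.congr' ?_
    filter_upwards [eventually_gt_atTop 0] with m hm
    rw [zpow_neg]
    norm_cast
    field_simp

lemma aux_indep {Ω : Type*} [MeasurableSpace Ω] (P : Measure Ω) [IsProbabilityMeasure P]
    (X Y : Ω → ℝ) (hX : Measurable X) (hY : Measurable Y) (s r : ℝ) (hs : 0 ≤ s) (hr : 0 ≤ r)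
    (h : ∀ p q : ℝ, Measure.map (fun ω => p * X ω + q * Y ω) P =
      gaussianReal 0 (Real.toNNReal (p ^ 2 * s + q ^ 2 * r))) : IndepFun X Y P := by
  rw [indepFun_iff_charFunDual_prod hX.aemeasurable hY.aemeasurable]
  intro L
  have hL : ∀ x y, L (x, y) = L (1, 0) * x + L (0, 1) * y := by
    intro x y
    have : ((x, y) : ℝ × ℝ) = x • (1, 0) + y • (0, 1) := by simp
    rw [this, map_add, map_smul, map_smul]
    simp [mul_comm]
  set p := L (1, 0)
  set q := L (0, 1)
  rw [charFunDual_eq_charFun_map_one, charFunDual_eq_charFun_map_one, charFunDual_eq_charFun_map_one,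
    Measure.map_map (by fun_prop) (by fun_prop), Measure.map_map (by fun_prop) (by fun_prop),
    Measure.map_map (by fun_prop) (by fun_prop)]
  have e1 : (L ∘ fun ω => (X ω, Y ω)) = fun ω => p * X ω + q * Y ω := by
    ext ω; simp [hL]
  have e2 : ((L.comp (ContinuousLinearMap.inl ℝ ℝ ℝ)) ∘ X) = fun ω => p * X ω + 0 * Y ω := by
    ext ω; simp [hL (X ω) 0]
  have e3 : ((L.comp (ContinuousLinearMap.inr ℝ ℝ ℝ)) ∘ Y) = fun ω => 0 * X ω + q * Y ω := by
    ext ω; simp [hL 0 (Y ω)]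
  rw [e1, e2, e3, h, h, h, charFun_gaussianReal, charFun_gaussianReal, charFun_gaussianReal,
    ← Complex.exp_add]
  congr 1
  rw [Real.coe_toNNReal _ (by positivity), Real.coe_toNNReal _ (by positivity),
    Real.coe_toNNReal _ (by positivity)]
  push_cast
  ring

lemma aux_moment {Ω : Type*} [MeasurableSpace Ω] (P : Measure Ω) [IsProbabilityMeasure P]
    (X Y : Ω → ℝ) (hX : Measurable X) (hY : Measurable Y) (s r : ℝ) (hs : 0 < s) (hr : 0 ≤ r)
    (h : ∀ p q : ℝ, Measure.map (fun ω => p * X ω + q * Y ω) P =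
      gaussianReal 0 (Real.toNNReal (p ^ 2 * s + q ^ 2 * r))) (α β m : ℝ) :
    (∫ ω in {ω | m < X ω}, (α * X ω + Y ω) * (β * X ω - Y ω) ∂P) =
      α * β * (∫ x in Set.Ioi m, x ^ 2 * gaussianPDFReal 0 s.toNNReal x)
        - r * (∫ x in Set.Ioi m, gaussianPDFReal 0 s.toNNReal x) ∧
    (P {ω | m < X ω}).toReal = ∫ x in Set.Ioi m, gaussianPDFReal 0 s.toNNReal x := by
  have hind := aux_indep P X Y hX hY s r hs.le hr h
  have hs0 : s.toNNReal ≠ 0 := by simpa using hs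
  have lX : Measure.map X P = gaussianReal 0 s.toNNReal := by simpa using h 1 0
  have lY : Measure.map Y P = gaussianReal 0 r.toNNReal := by simpa using h 0 1
  have mX : MemLp X 2 P := by
    have := memLp_id_gaussianReal' (μ := 0) (v := s.toNNReal) 2 (by simp)
    rw [← lX, memLp_map_measure_iff (by fun_prop) (by fun_prop)] at this
    exact this
  have mY : MemLp Y 2 P := by
    have := memLp_id_gaussianReal' (μ := 0) (v := r.toNNReal) 2 (by simp)
    rw [← lY, memLp_map_measure_iff (by fun_prop) (by fun_prop)] at this
    exact this
  have eY : ∫ ω, Y ω ∂P = 0 := by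
    have := integral_id_gaussianReal (μ := 0) (v := r.toNNReal)
    rw [← lY, integral_map (by fun_prop) (by fun_prop)] at this
    exact this
  have eY2 : ∫ ω, Y ω ^ 2 ∂P = r := by
    have h1 := variance_fun_id_gaussianReal (μ := 0) (v := r.toNNReal)
    rw [← lY, variance_map (by fun_prop) (by fun_prop), variance_of_integral_eq_zero (by fun_prop)] at h1
    · simpa [hr] using h1
    · simpa using eY
  have hmeas : MeasurableSet {ω | m < X ω} := measurableSet_lt measurable_const hX
  set S := {ω | m < X ω} with hS
  have hS' : S = X ⁻¹' (Set.Ioi m) := rfl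
  have hP : (P S).toReal = ∫ x in Set.Ioi m, gaussianPDFReal 0 s.toNNReal x := by
    rw [hS', ← Measure.map_apply hX measurableSet_Ioi, lX, gaussianReal_apply_eq_integral _ hs0,
      ENNReal.toReal_ofReal]
    exact setIntegral_nonneg measurableSet_Ioi fun x _ => gaussianPDFReal_nonneg _ _ _
  refine ⟨?_, hP⟩
  have i1 : Integrable (fun ω => X ω ^ 2) P := mX.integrable_sq
  have i2 : Integrable (fun ω => X ω * Y ω) P := mX.integrable_mul mY
  have i3 : Integrable (fun ω => Y ω ^ 2) P := mY.integrable_sq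
  have eX2 : ∫ ω in S, X ω ^ 2 ∂P = ∫ x in Set.Ioi m, x ^ 2 * gaussianPDFReal 0 s.toNNReal x := by
    have e := setIntegral_map (μ := P) (g := X) (f := fun x : ℝ => x ^ 2) (s := Set.Ioi m) measurableSet_Ioi
      (by fun_prop) hX.aemeasurable
    rw [hS', ← e, lX, ← integral_indicator measurableSet_Ioi, integral_gaussianReal_eq_integral_smul hs0,
      ← integral_indicator measurableSet_Ioi]
    congr 1
    ext x
    by_cases hx : x ∈ Set.Ioi m
    · simp only [Set.indicator_of_mem hx, smul_eq_mul]; ring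
    · simp only [Set.indicator_of_notMem hx, smul_zero]
  have gen : ∀ φ ψ : ℝ → ℝ, Measurable φ → Measurable ψ →
      ∫ ω in S, φ (X ω) * ψ (Y ω) ∂P = (∫ ω in S, φ (X ω) ∂P) * ∫ ω, ψ (Y ω) ∂P := by
    intro φ ψ hφ hψ
    have hm1 : Measurable ((Set.Ioi m).indicator φ) := hφ.indicator measurableSet_Ioi
    have := (hind.comp hm1 hψ).integral_fun_mul_eq_mul_integral
      (hm1.comp hX).aestronglyMeasurable (hψ.comp hY).aestronglyMeasurable
    rw [← integral_indicator hmeas, ← integral_indicator hmeas]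
    have e1 : (S.indicator fun ω => φ (X ω)) = (Set.Ioi m).indicator φ ∘ X := by
      ext ω
      by_cases hx : m < X ω <;> simp [hS, Set.indicator, hx]
    have e2 : (S.indicator fun ω => φ (X ω) * ψ (Y ω)) =
        fun ω => ((Set.Ioi m).indicator φ ∘ X) ω * (ψ ∘ Y) ω := by
      ext ω
      by_cases hx : m < X ω <;> simp [hS, Set.indicator, hx]
    rw [e1, e2]
    exact this
  have eXY : ∫ ω in S, X ω * Y ω ∂P = 0 := by
    have := gen id id measurable_id measurable_id
    simp only [id] at this
    rw [this, eY, mul_zero]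
  have eYY : ∫ ω in S, Y ω ^ 2 ∂P = r * (P S).toReal := by
    have := gen (fun _ => 1) (fun y => y ^ 2) (by fun_prop) (by fun_prop)
    simp only [one_mul] at this
    rw [this, eY2]
    simp [Measure.real, mul_comm]
  have : ∀ ω, (α * X ω + Y ω) * (β * X ω - Y ω) =
      (α * β) * X ω ^ 2 + (β - α) * (X ω * Y ω) - Y ω ^ 2 := fun ω => by ring
  simp_rw [this]
  have i12 : Integrable (fun ω => (α * β) * X ω ^ 2 + (β - α) * (X ω * Y ω)) (P.restrict S) :=
    ((i1.const_mul (α * β)).add (i2.const_mul (β - α))).integrableOn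
  rw [integral_sub i12 i3.integrableOn,
    integral_add (i1.const_mul _).integrableOn (i2.const_mul _).integrableOn,
    integral_const_mul, integral_const_mul, eX2, eXY, eYY, hP]
  ring

/-- Mixed conditional moment expansion:
`E[Gξ | M > m] = ((a+c)(b+c)/(a+b+2c)²) m² + (a+c)(b+c)/(a+b+2c) + c - 2(a+c)(b+c)/m² + o(m⁻²)`. -/
theorem gaussian_condExp_mixed_expansion {Ω : Type*} [MeasureSpace Ω] [IsProbabilityMeasure (ℙ : Measure Ω)]
    (G ξ : Ω → ℝ) (hG : Measurable G) (hξ : Measurable ξ)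
    (a b c : ℝ) (ha : 0 < a) (hb : 0 < b) (hc : |c| < Real.sqrt (a * b))
    (hlaw : ∀ u v : ℝ, Measure.map (fun ω => u * G ω + v * ξ ω) ℙ =
      gaussianReal 0 (Real.toNNReal (u ^ 2 * a + 2 * u * v * c + v ^ 2 * b))) :
    (fun m : ℝ => condExpEvent (fun ω => G ω * ξ ω) {ω | m < G ω + ξ ω} -
        ((a + c) * (b + c) / (a + b + 2 * c) ^ 2 * m ^ 2
          + (a + c) * (b + c) / (a + b + 2 * c) + c
          - 2 * (a + c) * (b + c) / m ^ 2))
      =o[atTop] (fun m : ℝ => m ^ (-(2 : ℤ))) := by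
  have hc2 : c ^ 2 < a * b := by
    rw [← sq_abs]
    exact (Real.lt_sqrt (abs_nonneg c)).1 hc
  have hs : 0 < a + b + 2 * c := by
    by_contra hcon
    push Not at hcon
    nlinarith [sq_nonneg (a - b), mul_pos ha hb]
  obtain ⟨s, hsd⟩ : ∃ s, s = a + b + 2 * c := ⟨_, rfl⟩
  rw [← hsd] at hs ⊢
  obtain ⟨r, hrd⟩ : ∃ r, r = (a * b - c ^ 2) / s := ⟨_, rfl⟩
  have hr : 0 ≤ r := by rw [hrd]; apply div_nonneg <;> linarith
  obtain ⟨α, hα⟩ : ∃ α, α = (a + c) / s := ⟨_, rfl⟩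
  obtain ⟨β, hβ⟩ : ∃ β, β = (b + c) / s := ⟨_, rfl⟩
  have hαβ : α + β = 1 := by rw [hα, hβ, ← add_div, div_eq_one_iff_eq hs.ne']; linarith
  have hmom := aux_moment (ℙ : Measure Ω) (fun ω => G ω + ξ ω) (fun ω => β * G ω - α * ξ ω)
    (by fun_prop) (by fun_prop) s r hs hr (by
      intro p q
      have := hlaw (p + q * β) (p - q * α)
      convert this using 2
      · ext ω; ring
      · congr 1
        have hb' : b + c = s - (a + c) := by linarith
        have hb'' : b = s - a - 2 * c := by linarith
        rw [hrd, hα, hβ, hb', hb'']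
        field_simp
        ring) α β
  have hv : s.toNNReal ≠ 0 := by simpa using hs
  have hvs : (s.toNNReal : ℝ) = s := Real.coe_toNNReal s hs.le
  set f := gaussianPDFReal 0 s.toNNReal with hf
  have hfpos : ∀ x, 0 < f x := fun x => gaussianPDFReal_pos 0 _ x hv
  set Q : ℝ → ℝ := fun m => ∫ x in Set.Ioi m, f x with hQ
  have hexp := aux_expansion s hs (fun m => Q m / f m) (by
    intro m hm
    obtain ⟨δ, h0, h1, h2⟩ := aux_tail_bounds s.toNNReal hv m hm
    rw [hvs] at h1 h2
    refine ⟨δ, h0, h1, ?_⟩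
    simp only [hQ]
    rw [hf, h2]
    have := (hfpos m).ne'
    rw [hf] at this
    field_simp)
  refine (hexp.const_mul_left (α * β)).congr' ?_ EventuallyEq.rfl
  filter_upwards [eventually_gt_atTop 0] with m hm
  have hQpos : 0 < Q m := by
    simp only [hQ]
    rw [setIntegral_pos_iff_support_of_nonneg_ae (Eventually.of_forall fun x => (hfpos x).le)
      (integrable_gaussianPDFReal _ _).integrableOn]
    have : Function.support f = Set.univ := by
      ext x; simp [(hfpos x).ne']
    simp [this]
  obtain ⟨h1, h2⟩ := hmom m
  have hsq := aux_tail_sq s.toNNReal hv m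
  rw [hvs] at hsq
  rw [condExpEvent, h2]
  have e : ∀ ω, G ω * ξ ω = (α * (G ω + ξ ω) + (β * G ω - α * ξ ω)) *
      (β * (G ω + ξ ω) - (β * G ω - α * ξ ω)) := by
    intro ω
    have : β = 1 - α := by linarith
    rw [this]; ring
  simp_rw [e]
  rw [h1, hsq]
  change _ = (α * β * (s * m * f m + s * Q m) - r * Q m) / Q m - _
  have hfm := (hfpos m).ne'
  have hQm := hQpos.ne'
  have e2 : (α * β * (s * m * f m + s * Q m) - r * Q m) / Q m =
      α * β * (s * m / (Q m / f m)) + (α * β * s - r) := by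
    field_simp
    ring
  rw [e2]
  have e3 : α * β * s - r = c := by
    have hb'' : b = s - a - 2 * c := by linarith
    rw [hrd, hα, hβ, hb'']
    field_simp
    ring
  rw [e3, hα, hβ]
  generalize s * m / (Q m / f m) = A
  field_simp
  ring
end

section
/- Let (G, ξ) be a centered bivariate Gaussian vector with covariance matrix [[a, c], [c, b]], a, b > 0, |c| < √(ab), and M = G + ξ. Then the conditional variance of G given {M > m} satisfies Var(G | M > m) → (ab - c²)/(a + b + 2c) as m → ∞; more precisely Var(G | M > m) = (ab-c²)/(a+b+2c) + (a+c)²/m² + o(m⁻²). -/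
open MeasureTheory ProbabilityTheory Filter Asymptotics Real

/-- Variance of `X` conditioned on an event `s`. -/
noncomputable def condVarEvent {Ω : Type*} [MeasureSpace Ω] (X : Ω → ℝ) (s : Set Ω) : ℝ :=
  condExpEvent (fun ω => X ω ^ 2) s - (condExpEvent X s) ^ 2

/-- Covariance of `X` and `Y` conditioned on an event `s`. -/
noncomputable def condCovEvent {Ω : Type*} [MeasureSpace Ω] (X Y : Ω → ℝ) (s : Set Ω) : ℝ :=
  condExpEvent (fun ω => X ω * Y ω) s - condExpEvent X s * condExpEvent Y s


lemma phi_eq (v : NNReal) (x : ℝ) : gaussianPDFReal 0 v x =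
    (√(2 * π * v))⁻¹ * rexp (-(1 / (2 * (v:ℝ))) * x ^ 2) := by
  rw [gaussianPDFReal_def]; simp only [sub_zero]; congr 2; ring

lemma phi_deriv (v : NNReal) (hv : v ≠ 0) (x : ℝ) :
    HasDerivAt (gaussianPDFReal 0 v) (-(x / v) * gaussianPDFReal 0 v x) x := by
  have hv' : (v : ℝ) ≠ 0 := by exact_mod_cast hv
  have : gaussianPDFReal 0 v = fun x => (√(2 * π * v))⁻¹ * rexp (-(1 / (2 * (v:ℝ))) * x ^ 2) := by
    ext x; exact phi_eq v x
  rw [this]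
  have h := (((hasDerivAt_pow 2 x).const_mul (-(1 / (2 * (v:ℝ))))).exp).const_mul (√(2 * π * v))⁻¹
  refine h.congr_deriv ?_
  simp only [Nat.cast_ofNat, Nat.add_one_sub_one, pow_one]
  field_simp

lemma phi_pow_tendsto (v : NNReal) (hv : v ≠ 0) (k : ℕ) :
    Tendsto (fun x => x ^ k * gaussianPDFReal 0 v x) atTop (nhds 0) := by
  have hv' : (0:ℝ) < v := by exact_mod_cast pos_iff_ne_zero.2 hv
  have h := (rpow_mul_exp_neg_mul_sq_isLittleO_exp_neg (b := 1 / (2 * (v:ℝ))) (by positivity) (k:ℝ))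
  have h2 : Tendsto (fun x : ℝ => rexp (-(1/2) * x)) atTop (nhds 0) := by
    apply tendsto_exp_atBot.comp
    exact tendsto_id.const_mul_atTop_of_neg (by norm_num)
  have h3 := (h.trans_tendsto h2).const_mul (√(2 * π * v))⁻¹
  rw [mul_zero] at h3
  refine h3.congr fun x => ?_
  rw [phi_eq, rpow_natCast]; ring

lemma phi_pow_int (v : NNReal) (hv : v ≠ 0) (k : ℕ) :
    Integrable (fun x => x ^ k * gaussianPDFReal 0 v x) := by
  have hv' : (0:ℝ) < v := by exact_mod_cast pos_iff_ne_zero.2 hv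
  have h := (integrable_rpow_mul_exp_neg_mul_sq (b := 1 / (2 * (v:ℝ))) (by positivity) (s := (k:ℝ))
    (by linarith [(Nat.cast_nonneg k : (0:ℝ) ≤ k)])).const_mul (√(2 * π * v))⁻¹
  refine h.congr (Eventually.of_forall fun x => ?_)
  simp only [phi_eq, rpow_natCast]; ring

lemma E1_eq (v : NNReal) (hv : v ≠ 0) (m : ℝ) :
    ∫ x in Set.Ioi m, x * gaussianPDFReal 0 v x = v * gaussianPDFReal 0 v m := by
  have hv' : (v : ℝ) ≠ 0 := by exact_mod_cast hv
  have := integral_Ioi_of_hasDerivAt_of_tendsto' (a := m) (f := fun x => -(v:ℝ) * gaussianPDFReal 0 v x)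
    (f' := fun x => x * gaussianPDFReal 0 v x) (m := 0)
    (fun x _ => ((phi_deriv v hv x).const_mul (-(v:ℝ))).congr_deriv (by field_simp))
    (by simpa using (phi_pow_int v hv 1).integrableOn)
    (by simpa using (phi_pow_tendsto v hv 0).const_mul (-(v:ℝ)))
  rw [this]; ring

lemma E2_eq (v : NNReal) (hv : v ≠ 0) (m : ℝ) :
    ∫ x in Set.Ioi m, x ^ 2 * gaussianPDFReal 0 v x = v * m * gaussianPDFReal 0 v m
      + v * ∫ x in Set.Ioi m, gaussianPDFReal 0 v x := by
  have hv' : (v : ℝ) ≠ 0 := by exact_mod_cast hv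
  have i0 : IntegrableOn (fun x => gaussianPDFReal 0 v x) (Set.Ioi m) :=
    (integrable_gaussianPDFReal 0 v).integrableOn
  have i2 := (phi_pow_int v hv 2).integrableOn (s := Set.Ioi m)
  have := integral_Ioi_of_hasDerivAt_of_tendsto' (a := m)
    (f := fun x => -(v:ℝ) * (x * gaussianPDFReal 0 v x))
    (f' := fun x => x ^ 2 * gaussianPDFReal 0 v x - v * gaussianPDFReal 0 v x) (m := 0)
    (fun x _ => (((hasDerivAt_id x).mul (phi_deriv v hv x)).const_mul (-(v:ℝ))).congr_deriv
      (by simp only [id]; field_simp; ring))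
    (i2.sub (i0.const_mul _))
    (by simpa using (phi_pow_tendsto v hv 1).const_mul (-(v:ℝ)))
  rw [integral_sub i2 (i0.const_mul _), integral_const_mul] at this
  linarith

lemma P_pos (v : NNReal) (hv : v ≠ 0) (m : ℝ) :
    0 < ∫ x in Set.Ioi m, gaussianPDFReal 0 v x := by
  rw [setIntegral_pos_iff_support_of_nonneg_ae
    (Eventually.of_forall fun x => gaussianPDFReal_nonneg 0 v x)
    (integrable_gaussianPDFReal 0 v).integrableOn]
  have : Function.support (gaussianPDFReal 0 v) = Set.univ := by
    ext x; simp [(gaussianPDFReal_pos 0 v x hv).ne']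
  rw [this]; simp

lemma P_mills (v : NNReal) (hv : v ≠ 0) (m : ℝ) (hm : 0 < m) :
    ∃ ε : ℝ, 0 ≤ ε ∧ ε ≤ 15 * v ^ 3 / m ^ 6 ∧
    (∫ x in Set.Ioi m, gaussianPDFReal 0 v x) * (1 + ε) =
      (v / m - v ^ 2 / m ^ 3 + 3 * v ^ 3 / m ^ 5) * gaussianPDFReal 0 v m := by
  have hv' : (v : ℝ) ≠ 0 := by exact_mod_cast hv
  have i0 : IntegrableOn (fun x => gaussianPDFReal 0 v x) (Set.Ioi m) :=
    (integrable_gaussianPDFReal 0 v).integrableOn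
  have hb : ∀ x ∈ Set.Ioi m, 15 * (v:ℝ) ^ 3 / x ^ 6 * gaussianPDFReal 0 v x ≤
      15 * v ^ 3 / m ^ 6 * gaussianPDFReal 0 v x := by
    intro x hx
    have := gaussianPDFReal_nonneg 0 v x
    have hx' : m ≤ x := le_of_lt hx
    gcongr
  have hn : ∀ x ∈ Set.Ioi m, 0 ≤ 15 * (v:ℝ) ^ 3 / x ^ 6 * gaussianPDFReal 0 v x := by
    intro x hx
    have := gaussianPDFReal_nonneg 0 v x
    have hx' : 0 < x := hm.trans hx
    positivity
  have iJ : IntegrableOn (fun x => 15 * (v:ℝ) ^ 3 / x ^ 6 * gaussianPDFReal 0 v x) (Set.Ioi m) := by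
    refine (i0.const_mul (15 * (v:ℝ) ^ 3 / m ^ 6)).mono' ?_ ?_
    · have := measurable_gaussianPDFReal 0 v
      exact Measurable.aestronglyMeasurable (by fun_prop)
    · refine (ae_restrict_iff' measurableSet_Ioi).2 (Eventually.of_forall fun x hx => ?_)
      rw [norm_of_nonneg (hn x hx)]; exact hb x hx
  have inv_t : Tendsto (fun x : ℝ => x⁻¹) atTop (nhds 0) := tendsto_inv_atTop_zero
  have := integral_Ioi_of_hasDerivAt_of_tendsto' (a := m)
    (f := fun x => -((v:ℝ) * x⁻¹ - v ^ 2 * x⁻¹ ^ 3 + 3 * v ^ 3 * x⁻¹ ^ 5) * gaussianPDFReal 0 v x)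
    (f' := fun x => gaussianPDFReal 0 v x + 15 * v ^ 3 / x ^ 6 * gaussianPDFReal 0 v x) (m := 0)
    (fun x hx => by
      have hx0 : x ≠ 0 := (hm.trans_le hx).ne'
      have hi := hasDerivAt_inv hx0
      have h := ((((hi.const_mul (v:ℝ)).sub ((hi.pow 3).const_mul ((v:ℝ)^2))).add
        ((hi.pow 5).const_mul (3 * (v:ℝ)^3))).neg).mul (phi_deriv v hv x)
      refine h.congr_deriv ?_
      simp
      field_simp
      ring)
    (i0.add iJ)
    (by
      have h := (((inv_t.const_mul (v:ℝ)).sub ((inv_t.pow 3).const_mul ((v:ℝ)^2))).add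
        ((inv_t.pow 5).const_mul (3 * (v:ℝ)^3))).neg.mul (phi_pow_tendsto v hv 0)
      simpa using h)
  rw [integral_add i0 iJ] at this
  have hP := P_pos v hv m
  refine ⟨(∫ x in Set.Ioi m, 15 * (v:ℝ) ^ 3 / x ^ 6 * gaussianPDFReal 0 v x) /
    ∫ x in Set.Ioi m, gaussianPDFReal 0 v x, ?_, ?_, ?_⟩
  · exact div_nonneg (setIntegral_nonneg measurableSet_Ioi hn) hP.le
  · rw [div_le_iff₀ hP, ← integral_const_mul]
    exact setIntegral_mono_on iJ (i0.const_mul _) measurableSet_Ioi hb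
  · rw [mul_add, mul_div_cancel₀ _ hP.ne', mul_one, this]
    field_simp
    ring

lemma trunc_lim (v : NNReal) (hv : v ≠ 0) :
    Tendsto (fun m : ℝ => m ^ 2 *
      ((∫ x in Set.Ioi m, x ^ 2 * gaussianPDFReal 0 v x) / (∫ x in Set.Ioi m, gaussianPDFReal 0 v x)
       - ((∫ x in Set.Ioi m, x * gaussianPDFReal 0 v x) /
          (∫ x in Set.Ioi m, gaussianPDFReal 0 v x)) ^ 2)) atTop (nhds ((v:ℝ) ^ 2)) := by
  have hv0 : (0:ℝ) < v := by exact_mod_cast pos_iff_ne_zero.2 hv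
  set P : ℝ → ℝ := fun m => ∫ x in Set.Ioi m, gaussianPDFReal 0 v x with hPdef
  set φ := gaussianPDFReal 0 v with hφ
  set T : ℝ → ℝ := fun m => m * (P m / φ m) / v with hT
  set A : ℝ → ℝ := fun m => 1 - v * m⁻¹ ^ 2 + 3 * v ^ 2 * m⁻¹ ^ 4 with hA
  set η : ℝ → ℝ := fun m => (T m - A m) * m ^ 4 with hη
  set q : ℝ → ℝ := fun m => -v + 3 * v ^ 2 * m⁻¹ ^ 2 + m⁻¹ ^ 2 * η m with hq
  have inv_t : Tendsto (fun x : ℝ => x⁻¹) atTop (nhds 0) := tendsto_inv_atTop_zero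
  have hAt : Tendsto A atTop (nhds 1) := by
    have := ((tendsto_const_nhds (x := (1:ℝ))).sub ((inv_t.pow 2).const_mul (v:ℝ))).add
      ((inv_t.pow 4).const_mul (3 * (v:ℝ)^2))
    simpa [hA] using this
  have key : ∀ m, 0 < m → 0 < T m ∧ |η m| ≤ A m * (15 * v ^ 3) * m⁻¹ ^ 2 := by
    intro m hm
    obtain ⟨ε, h0, h1, h2⟩ := P_mills v hv m hm
    have hp : 0 < φ m := gaussianPDFReal_pos 0 v m hv
    have hP : 0 < P m := P_pos v hv m
    have hTp : 0 < T m := by simp only [hT]; positivity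
    have hTA : T m * (1 + ε) = A m := by
      have : T m * (1 + ε) = m * (P m * (1 + ε)) / φ m / v := by simp only [hT]; ring
      rw [this, h2]; simp only [hA, ← hφ]; field_simp
    have hle : T m ≤ A m := by nlinarith
    refine ⟨hTp, ?_⟩
    have : η m = -(T m * ε * m ^ 4) := by simp only [hη]; rw [← hTA]; ring
    rw [this, abs_neg, abs_of_nonneg (by positivity)]
    calc T m * ε * m ^ 4 ≤ A m * (15 * v ^ 3 / m ^ 6) * m ^ 4 := by gcongr; exact hTp.le.trans hle
      _ = _ := by field_simp
  have hηt : Tendsto η atTop (nhds 0) := by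
    apply squeeze_zero_norm' (a := fun m => A m * (15 * v ^ 3) * m⁻¹ ^ 2)
    · filter_upwards [eventually_gt_atTop 0] with m hm using (key m hm).2
    · simpa using (hAt.mul_const (15 * (v:ℝ) ^ 3)).mul (inv_t.pow 2)
  have hqt : Tendsto q atTop (nhds (-v)) := by
    have := ((tendsto_const_nhds (x := -(v:ℝ))).add ((inv_t.pow 2).const_mul (3 * (v:ℝ)^2))).add
      ((inv_t.pow 2).mul hηt)
    simpa [hq] using this
  have hTt : Tendsto T atTop (nhds 1) := by
    have : Tendsto (fun m => A m + η m * m⁻¹ ^ 4) atTop (nhds 1) := by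
      simpa using hAt.add (hηt.mul (inv_t.pow 4))
    refine this.congr' ?_
    filter_upwards [eventually_gt_atTop 0] with m hm
    simp only [hη]; field_simp; ring
  have fin : Tendsto (fun m => (2 * v * q m + v * m⁻¹ ^ 2 * q m ^ 2 + 3 * v ^ 2 + η m) / T m ^ 2)
      atTop (nhds ((v:ℝ) ^ 2)) := by
    have := ((((hqt.const_mul (2 * (v:ℝ))).add (((inv_t.pow 2).const_mul (v:ℝ)).mul (hqt.pow 2))).add
      (tendsto_const_nhds (x := 3 * (v:ℝ)^2))).add hηt).div (hTt.pow 2) (by norm_num)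
    have e : (2 * (v:ℝ) * -v + v * 0 ^ 2 * (-v) ^ 2 + 3 * v ^ 2 + 0) / 1 ^ 2 = v ^ 2 := by ring
    rw [e] at this
    exact this
  refine fin.congr' ?_
  filter_upwards [eventually_gt_atTop 0] with m hm
  have hp : 0 < φ m := gaussianPDFReal_pos 0 v m hv
  have hP : 0 < P m := P_pos v hv m
  have hTp := (key m hm).1
  rw [E1_eq v hv, E2_eq v hv, ← hφ]
  change _ = m ^ 2 * ((v * m * φ m + v * P m) / P m - (v * φ m / P m) ^ 2)
  have e1 : P m = v * T m * φ m / m := by simp only [hT]; field_simp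
  have e2 : T m = 1 + m⁻¹ ^ 2 * q m := by simp only [hq, hη, hA]; field_simp; ring
  have e3 : η m = m ^ 2 * (q m + v) - 3 * v ^ 2 := by simp only [hq]; field_simp; ring
  rw [e3, e1]
  have : m ^ 2 * ((v * m * φ m + v * (v * T m * φ m / m)) / (v * T m * φ m / m) -
    (v * φ m / (v * T m * φ m / m)) ^ 2) = (m ^ 4 * (T m - 1) + m ^ 2 * v * T m ^ 2) / T m ^ 2 := by
    field_simp; ring
  rw [this]
  congr 1
  rw [e2]
  field_simp
  ring

lemma indep_condVar {Ω : Type*} [MeasureSpace Ω] [IsProbabilityMeasure (ℙ : Measure Ω)]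
    (W M : Ω → ℝ) (hW : Measurable W) (hM : Measurable M) (σ s β : ℝ) (hσ : 0 ≤ σ) (hs : 0 < s)
    (hlaw : ∀ u v : ℝ, Measure.map (fun ω => u * W ω + v * M ω) ℙ =
      gaussianReal 0 (Real.toNNReal (u ^ 2 * σ + v ^ 2 * s))) (m : ℝ) :
    condVarEvent (fun ω => β * M ω + W ω) {ω | m < M ω} = σ + β ^ 2 *
      ((∫ x in Set.Ioi m, x ^ 2 * gaussianPDFReal 0 s.toNNReal x) /
          (∫ x in Set.Ioi m, gaussianPDFReal 0 s.toNNReal x)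
       - ((∫ x in Set.Ioi m, x * gaussianPDFReal 0 s.toNNReal x) /
          (∫ x in Set.Ioi m, gaussianPDFReal 0 s.toNNReal x)) ^ 2) := by
  have hv : s.toNNReal ≠ 0 := by simpa using hs
  have hgl : ∀ u v : ℝ, HasGaussianLaw (fun ω => u * W ω + v * M ω) ℙ := fun u v =>
    ⟨by rw [hlaw]; infer_instance⟩
  have hmean : ∀ u v : ℝ, ∫ ω, (u * W ω + v * M ω) = 0 := by
    intro u v
    have : ∫ x, x ∂(Measure.map (fun ω => u * W ω + v * M ω) ℙ) = 0 := by
      rw [hlaw]; simp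
    rwa [integral_map (by fun_prop) (by fun_prop)] at this
  have hsq : ∀ u v : ℝ, ∫ ω, (u * W ω + v * M ω) ^ 2 = u ^ 2 * σ + v ^ 2 * s := by
    intro u v
    have h1 : Var[fun ω => u * W ω + v * M ω; ℙ] = u ^ 2 * σ + v ^ 2 * s := by
      have := variance_map (X := id) (μ := (ℙ : Measure Ω)) (Y := fun ω => u * W ω + v * M ω)
        (by fun_prop) (by fun_prop)
      rw [hlaw, variance_id_gaussianReal, Real.coe_toNNReal _ (by positivity)] at this
      exact this.symm
    rwa [variance_of_integral_eq_zero (by fun_prop) (hmean u v)] at h1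
  have hW2 : MemLp W 2 ℙ := by simpa using (hgl 1 0).memLp_two
  have hM2 : MemLp M 2 ℙ := by simpa using (hgl 0 1).memLp_two
  have hWi : Integrable W ℙ := hW2.integrable (by norm_num)
  have hMi : Integrable M ℙ := hM2.integrable (by norm_num)
  have hWW : Integrable (fun ω => W ω ^ 2) ℙ := hW2.integrable_sq
  have hMM : Integrable (fun ω => M ω ^ 2) ℙ := hM2.integrable_sq
  have hWM : Integrable (fun ω => W ω * M ω) ℙ := hW2.integrable_mul hM2
  have eW : ∫ ω, W ω = 0 := by simpa using hmean 1 0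
  have eM : ∫ ω, M ω = 0 := by simpa using hmean 0 1
  have eWW : ∫ ω, W ω ^ 2 = σ := by simpa using hsq 1 0
  have eMM : ∫ ω, M ω ^ 2 = s := by simpa using hsq 0 1
  have eWM : ∫ ω, W ω * M ω = 0 := by
    have h := hsq 1 1
    have e : (fun ω => (1 * W ω + 1 * M ω) ^ 2) =
      fun ω => W ω ^ 2 + 2 * (W ω * M ω) + M ω ^ 2 := by ext; ring
    have i1 : Integrable (fun ω => W ω ^ 2 + 2 * (W ω * M ω)) ℙ := hWW.add (hWM.const_mul 2)
    rw [e, integral_add i1 hMM, integral_add hWW (hWM.const_mul 2),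
      integral_const_mul, eWW, eMM] at h
    linarith
  have hind : IndepFun W M ℙ := by
    apply HasGaussianLaw.indepFun_of_covariance_eq_zero
    · refine ⟨isGaussian_of_map_eq_gaussianReal fun L => ?_⟩
      refine ⟨0, Real.toNNReal (L (1, 0) ^ 2 * σ + L (0, 1) ^ 2 * s), ?_⟩
      rw [Measure.map_map (by fun_prop) (by fun_prop), ← hlaw]
      congr 1
      ext ω
      have : (W ω, M ω) = W ω • ((1:ℝ), (0:ℝ)) + M ω • ((0:ℝ), (1:ℝ)) := by simp
      simp only [Function.comp]
      rw [this, map_add, map_smul, map_smul]; simp [mul_comm]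
    · rw [covariance_eq_sub hW2 hM2, eW, zero_mul, sub_zero]
      exact eWM
  set S := {ω | m < M ω} with hS
  have hSm : MeasurableSet S := measurableSet_lt measurable_const hM
  have hfac : ∀ f g : ℝ → ℝ, Measurable f → Measurable g →
      ∫ ω in S, f (W ω) * g (M ω) =
        (∫ ω, f (W ω)) * ∫ x in Set.Ioi m, g x * gaussianPDFReal 0 s.toNNReal x := by
    intro f g hf hg
    have hMlaw : Measure.map M ℙ = gaussianReal 0 s.toNNReal := by simpa using hlaw 0 1
    have hgi : Measurable ((Set.Ioi m).indicator g) := hg.indicator measurableSet_Ioi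
    have h := hind.integral_fun_comp_mul_comp (f := f) (g := (Set.Ioi m).indicator g)
      hW.aemeasurable hM.aemeasurable hf.aestronglyMeasurable hgi.aestronglyMeasurable
    rw [← integral_map (φ := M) (f := (Set.Ioi m).indicator g) hM.aemeasurable
      hgi.aestronglyMeasurable, hMlaw,
      integral_gaussianReal_eq_integral_smul hv] at h
    rw [← integral_indicator hSm, ← integral_indicator measurableSet_Ioi]
    have k1 : S.indicator (fun ω => f (W ω) * g (M ω)) =
        fun ω => f (W ω) * (Set.Ioi m).indicator g (M ω) := by
      ext ω; by_cases hω : m < M ω <;> simp [hS, Set.indicator, hω]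
    have k2 : (Set.Ioi m).indicator (fun x => g x * gaussianPDFReal 0 s.toNNReal x) =
        fun x => gaussianPDFReal 0 s.toNNReal x • (Set.Ioi m).indicator g x := by
      ext x; by_cases hx : m < x <;> simp [Set.indicator, hx, mul_comm]
    rw [k1, k2]
    exact h
  have hP : (ℙ S).toReal = ∫ x in Set.Ioi m, gaussianPDFReal 0 s.toNNReal x := by
    have := hfac (fun _ => 1) (fun _ => 1) measurable_const measurable_const
    simpa [Measure.real] using this
  have hPp := P_pos s.toNNReal hv m
  have h1 : ∫ ω in S, (β * M ω + W ω) =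
      β * ∫ x in Set.Ioi m, x * gaussianPDFReal 0 s.toNNReal x := by
    have h10 := hfac (fun x => x) (fun _ => 1) measurable_id measurable_const
    have h01 := hfac (fun _ => 1) (fun x => x) measurable_const measurable_id
    simp only [mul_one, one_mul, eW, zero_mul, integral_const, probReal_univ, smul_eq_mul] at h10 h01
    rw [integral_add (hMi.const_mul β).integrableOn hWi.integrableOn, integral_const_mul, h10, h01,
      add_zero]
  have h2 : ∫ ω in S, (β * M ω + W ω) ^ 2 =
      β ^ 2 * (∫ x in Set.Ioi m, x ^ 2 * gaussianPDFReal 0 s.toNNReal x) +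
      σ * ∫ x in Set.Ioi m, gaussianPDFReal 0 s.toNNReal x := by
    have h20 := hfac (fun x => x ^ 2) (fun _ => 1) (by fun_prop) measurable_const
    have h02 := hfac (fun _ => 1) (fun x => x ^ 2) measurable_const (by fun_prop)
    have h11 := hfac (fun x => x) (fun x => x) measurable_id measurable_id
    simp only [mul_one, one_mul, eW, eWW, zero_mul, integral_const, probReal_univ,
      smul_eq_mul] at h20 h02 h11
    have e : (fun ω => (β * M ω + W ω) ^ 2) =
      fun ω => β ^ 2 * M ω ^ 2 + 2 * β * (W ω * M ω) + W ω ^ 2 := by ext; ring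
    have i1 : Integrable (fun ω => β ^ 2 * M ω ^ 2 + 2 * β * (W ω * M ω)) ℙ :=
      (hMM.const_mul _).add (hWM.const_mul _)
    rw [e, integral_add i1.integrableOn hWW.integrableOn,
      integral_add (hMM.const_mul _).integrableOn (hWM.const_mul _).integrableOn,
      integral_const_mul, integral_const_mul, h20, h02, h11]
    ring
  unfold condVarEvent condExpEvent
  rw [hP, h1, h2]
  field_simp
  ring

/-- Conditional variance of the goal:
`Var(G | M > m) → (ab - c²)/(a+b+2c)`, and more precisely
`Var(G | M > m) = (ab-c²)/(a+b+2c) + (a+c)²/m² + o(m⁻²)`. -/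
theorem gaussian_condVar_goal {Ω : Type*} [MeasureSpace Ω] [IsProbabilityMeasure (ℙ : Measure Ω)]
    (G ξ : Ω → ℝ) (hG : Measurable G) (hξ : Measurable ξ)
    (a b c : ℝ) (ha : 0 < a) (hb : 0 < b) (hc : |c| < Real.sqrt (a * b))
    (hlaw : ∀ u v : ℝ, Measure.map (fun ω => u * G ω + v * ξ ω) ℙ =
      gaussianReal 0 (Real.toNNReal (u ^ 2 * a + 2 * u * v * c + v ^ 2 * b))) :
    Tendsto (fun m : ℝ => condVarEvent G {ω | m < G ω + ξ ω}) atTop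
      (nhds ((a * b - c ^ 2) / (a + b + 2 * c))) ∧
    (fun m : ℝ => condVarEvent G {ω | m < G ω + ξ ω} -
        ((a * b - c ^ 2) / (a + b + 2 * c) + (a + c) ^ 2 / m ^ 2))
      =o[atTop] (fun m : ℝ => m ^ (-(2 : ℤ))) := by
  have hab : 0 < a * b := mul_pos ha hb
  have hD : 0 < a * b - c ^ 2 := by
    have h := Real.sq_sqrt hab.le
    have h2 := abs_nonneg c
    have h3 := sq_abs c
    nlinarith
  have hs : 0 < a + b + 2 * c := by
    by_contra hcon
    have h4 : a + b ≤ -(2 * c) := by linarith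
    nlinarith [sq_nonneg (a - b)]
  set s := a + b + 2 * c with hsdef
  set β := (a + c) / s with hβ
  set σ := (a * b - c ^ 2) / s with hσ
  have hσp : 0 ≤ σ := (div_pos hD hs).le
  have hv : s.toNNReal ≠ 0 := by simpa using hs
  have hlim := trunc_lim s.toNNReal hv
  rw [Real.coe_toNNReal _ hs.le] at hlim
  set V : ℝ → ℝ := fun m =>
      ((∫ x in Set.Ioi m, x ^ 2 * gaussianPDFReal 0 s.toNNReal x) /
          (∫ x in Set.Ioi m, gaussianPDFReal 0 s.toNNReal x)
       - ((∫ x in Set.Ioi m, x * gaussianPDFReal 0 s.toNNReal x) /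
          (∫ x in Set.Ioi m, gaussianPDFReal 0 s.toNNReal x)) ^ 2) with hV
  have hcv' : ∀ m : ℝ, condVarEvent G {ω | m < G ω + ξ ω} = σ + β ^ 2 * V m := by
    intro m
    have h := indep_condVar (fun ω => G ω - β * (G ω + ξ ω)) (fun ω => G ω + ξ ω)
      (by fun_prop) (by fun_prop) σ s β hσp hs (by
        intro u v
        have h := hlaw (u * (1 - β) + v) (-(u * β) + v)
        have e1 : (fun ω => (u * (1 - β) + v) * G ω + (-(u * β) + v) * ξ ω) =
          fun ω => u * (G ω - β * (G ω + ξ ω)) + v * (G ω + ξ ω) := by ext; ring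
        rw [e1] at h
        rw [h]
        congr 2
        rw [hβ, hσ]
        field_simp
        rw [hsdef]
        ring) m
    have e2 : (fun ω => β * (G ω + ξ ω) + (G ω - β * (G ω + ξ ω))) = G := by ext; ring
    rw [e2] at h
    exact h
  have hlim' : Tendsto (fun m => m ^ 2 * V m) atTop (nhds (s ^ 2)) := hlim
  have inv_t : Tendsto (fun x : ℝ => x⁻¹) atTop (nhds 0) := tendsto_inv_atTop_zero
  simp only [hcv']
  constructor
  · have h : Tendsto (fun m => σ + β ^ 2 * (m⁻¹ ^ 2 * (m ^ 2 * V m))) atTop (nhds σ) := by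
      simpa using (((inv_t.pow 2).mul hlim').const_mul (β ^ 2)).const_add σ
    refine h.congr' ?_
    filter_upwards [eventually_gt_atTop 0] with m hm
    field_simp
  · rw [isLittleO_iff_tendsto']
    · have h : Tendsto (fun m => β ^ 2 * (m ^ 2 * V m) - (a + c) ^ 2) atTop (nhds 0) := by
        have h0 := (hlim'.const_mul (β ^ 2)).sub_const ((a + c) ^ 2)
        have e : β ^ 2 * s ^ 2 - (a + c) ^ 2 = 0 := by rw [hβ]; field_simp; ring
        rwa [e] at h0
      refine h.congr' ?_
      filter_upwards [eventually_gt_atTop 0] with m hm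
      rw [zpow_neg]
      norm_cast
      field_simp
      ring
    · filter_upwards [eventually_gt_atTop 0] with m hm h0
      exact absurd h0 (by positivity)
end

section
/- Let (G, ξ) be a centered bivariate Gaussian vector with covariance matrix [[a, c], [c, b]], a, b > 0, |c| < √(ab), and M = G + ξ. Then the conditional covariance Cov(G, M | M > m) satisfies Cov(G, M | M > m) = (a+c)(a+b+2c)/m² + o(m⁻²) as m → ∞. -/
open MeasureTheory ProbabilityTheory Filter Asymptotics Real

/-- Rescaled tail moments. -/
noncomputable def tailJ (s : ℝ) (k : ℕ) (m : ℝ) : ℝ :=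
  ∫ y in Set.Ioi (0 : ℝ), y ^ k * Real.exp (-(1 / s * y) - y ^ 2 / (2 * s * m ^ 2))

theorem tailJ_bound_integrable {s : ℝ} (hs : 0 < s) (k : ℕ) :
    IntegrableOn (fun y : ℝ => y ^ k * Real.exp (-(1 / s * y))) (Set.Ioi 0) := by
  have := integrableOn_rpow_mul_exp_neg_mul_rpow (p := 1) (s := k) (b := 1 / s)
    (by have : (0:ℝ) ≤ k := k.cast_nonneg
        linarith) one_pos (by positivity)
  simpa using this

theorem tailJ_tendsto {s : ℝ} (hs : 0 < s) (k : ℕ) :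
    Tendsto (tailJ s k) atTop (nhds (k.factorial * s ^ (k + 1))) := by
  have hlim : ∫ y in Set.Ioi (0 : ℝ), y ^ k * Real.exp (-(1 / s * y))
      = k.factorial * s ^ (k + 1) := by
    have := Real.integral_rpow_mul_exp_neg_mul_Ioi (a := k + 1) (r := 1 / s) (by positivity)
      (by positivity)
    simp only [add_sub_cancel_right, Real.rpow_natCast, Real.Gamma_nat_eq_factorial] at this
    rw [this]
    have h2 : (1 / (1 / s)) ^ ((k : ℝ) + 1) = s ^ (k + 1) := by
      rw [one_div_one_div]; exact_mod_cast Real.rpow_natCast s (k + 1)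
    rw [h2, mul_comm]
  rw [← hlim]
  unfold tailJ
  refine tendsto_integral_filter_of_dominated_convergence
    (fun y : ℝ => y ^ k * Real.exp (-(1 / s * y))) ?_ ?_ (tailJ_bound_integrable hs k) ?_
  · exact Eventually.of_forall fun m => by
      apply Measurable.aestronglyMeasurable; fun_prop
  · refine Eventually.of_forall fun m => ?_
    filter_upwards [ae_restrict_mem measurableSet_Ioi] with y hy
    have hy : 0 < y := hy
    rw [Real.norm_of_nonneg (by positivity)]
    gcongr
    have : 0 ≤ y ^ 2 / (2 * s * m ^ 2) := by positivity
    linarith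
  · refine Eventually.of_forall fun y => ?_
    refine Tendsto.const_mul _ ((Real.continuous_exp.tendsto _).comp ?_)
    have : Tendsto (fun m : ℝ => y ^ 2 / (2 * s * m ^ 2)) atTop (nhds 0) := by
      apply Tendsto.const_div_atTop
      exact (tendsto_pow_atTop (by norm_num)).const_mul_atTop (by positivity)
    simpa using tendsto_const_nhds.sub this

theorem tail_moment {s : ℝ} (hs : 0 < s) {m : ℝ} (hm : 0 < m) (k : ℕ) :
    ∫ x in Set.Ioi m, (x - m) ^ k ∂(gaussianReal 0 s.toNNReal)
      = gaussianPDFReal 0 s.toNNReal m / m * (m⁻¹ ^ k * tailJ s k m) := by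
  have hv : s.toNNReal ≠ 0 := by simpa using hs
  rw [gaussianReal_of_var_ne_zero _ hv, setIntegral_withDensity_eq_setIntegral_toReal_smul
    (measurable_gaussianPDF _ _) (Eventually.of_forall fun _ => gaussianPDF_lt_top)
    _ measurableSet_Ioi]
  simp only [toReal_gaussianPDF, smul_eq_mul]
  have h1 := integral_comp_mul_left_Ioi
    (fun y => gaussianPDFReal 0 s.toNNReal (y + m) * y ^ k) 0 (inv_pos.2 hm)
  have h2 : ∫ x in Set.Ioi m, gaussianPDFReal 0 s.toNNReal x * (x - m) ^ k
      = ∫ y in Set.Ioi 0, gaussianPDFReal 0 s.toNNReal (y + m) * y ^ k := by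
    have := (measurePreserving_add_right volume m).setIntegral_preimage_emb
      (measurableEmbedding_addRight m)
      (fun x => gaussianPDFReal 0 s.toNNReal x * (x - m) ^ k) (Set.Ioi m)
    rw [← this]
    simp
  rw [h2]
  simp only [mul_zero, inv_inv, smul_eq_mul] at h1
  rw [← mul_right_inj' hm.ne', ← h1]
  unfold tailJ
  rw [← integral_const_mul, ← integral_const_mul, ← integral_const_mul]
  refine integral_congr_ae (Eventually.of_forall fun y => ?_)
  simp only [gaussianPDFReal, sub_zero, Real.coe_toNNReal _ hs.le]
  have : Real.exp (-(m⁻¹ * y + m) ^ 2 / (2 * s)) = Real.exp (-m ^ 2 / (2 * s)) *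
      Real.exp (-(1 / s * y) - y ^ 2 / (2 * s * m ^ 2)) := by
    rw [← Real.exp_add]; congr 1; field_simp; ring
  rw [this, mul_pow]
  field_simp

theorem gauss_indep {Ω : Type*} [MeasureSpace Ω] [IsProbabilityMeasure (ℙ : Measure Ω)]
    (G ξ : Ω → ℝ) (hG : Measurable G) (hξ : Measurable ξ)
    (a b c : ℝ) (hs : 0 < a + b + 2 * c)
    (hq : ∀ u v : ℝ, 0 ≤ u ^ 2 * a + 2 * u * v * c + v ^ 2 * b)
    (hlaw : ∀ u v : ℝ, Measure.map (fun ω => u * G ω + v * ξ ω) ℙ =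
      gaussianReal 0 (Real.toNNReal (u ^ 2 * a + 2 * u * v * c + v ^ 2 * b))) :
    IndepFun (fun ω => G ω + ξ ω)
      (fun ω => G ω - (a + c) / (a + b + 2 * c) * (G ω + ξ ω)) ℙ := by
  set ρ := (a + c) / (a + b + 2 * c) with hρ
  have hρs : ρ * (a + b + 2 * c) = a + c := by rw [hρ]; exact div_mul_cancel₀ _ hs.ne'
  have key : ∀ u v : ℝ, charFun (Measure.map (fun ω => u * G ω + v * ξ ω) ℙ) 1
      = Complex.exp (-((u ^ 2 * a + 2 * u * v * c + v ^ 2 * b : ℝ) : ℂ) / 2) := by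
    intro u v
    rw [hlaw, charFun_gaussianReal, Real.coe_toNNReal _ (hq u v)]
    congr 1
    push_cast
    ring
  have scal : ∀ (X : Ω → ℝ), Measurable X → ∀ t : ℝ, charFun (Measure.map X ℙ) t
      = charFun (Measure.map (fun ω => t * X ω) ℙ) 1 := by
    intro X hX t
    rw [charFun_apply, charFun_apply, integral_map (by fun_prop) (by fun_prop),
      integral_map (by fun_prop) (by fun_prop)]
    simp [mul_comm]
  rw [indepFun_iff_charFun_prod (by fun_prop) (by fun_prop)]
  intro t
  obtain ⟨⟨p, q⟩, rfl⟩ : ∃ z : ℝ × ℝ, t = WithLp.toLp 2 z := ⟨t.ofLp, rfl⟩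
  have e0 : charFun (Measure.map (fun ω => WithLp.toLp 2 (G ω + ξ ω, G ω - ρ * (G ω + ξ ω))) ℙ)
      (WithLp.toLp 2 (p, q)) = charFun (Measure.map
        (fun ω => (p + q * (1 - ρ)) * G ω + (p - q * ρ) * ξ ω) ℙ) 1 := by
    rw [charFun_apply, charFun_apply, integral_map (by fun_prop) (by fun_prop),
      integral_map (by fun_prop) (by fun_prop)]
    refine integral_congr_ae (Eventually.of_forall fun ω => ?_)
    simp only [WithLp.prod_inner_apply, RCLike.inner_apply, conj_trivial]
    congr 3
    ring
  rw [e0, scal _ (by fun_prop) p, scal _ (by fun_prop) q]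
  have e1 : (fun ω => p * (G ω + ξ ω)) = fun ω => p * G ω + p * ξ ω := by
    funext ω; ring
  have e2 : (fun ω => q * (G ω - ρ * (G ω + ξ ω)))
      = fun ω => (q * (1 - ρ)) * G ω + (-(q * ρ)) * ξ ω := by
    funext ω; ring
  simp only [e1, e2]
  rw [key, key, key, ← Complex.exp_add]
  congr 1
  rw [← add_div, ← neg_add, ← Complex.ofReal_add]
  congr 3
  linear_combination (-2 * p * q) * hρs

theorem gaussian_condCov_goal_proxy {Ω : Type*} [MeasureSpace Ω] [IsProbabilityMeasure (ℙ : Measure Ω)]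
    (G ξ : Ω → ℝ) (hG : Measurable G) (hξ : Measurable ξ)
    (a b c : ℝ) (ha : 0 < a) (hb : 0 < b) (hc : |c| < Real.sqrt (a * b))
    (hlaw : ∀ u v : ℝ, Measure.map (fun ω => u * G ω + v * ξ ω) ℙ =
      gaussianReal 0 (Real.toNNReal (u ^ 2 * a + 2 * u * v * c + v ^ 2 * b))) :
    (fun m : ℝ => condCovEvent G (fun ω => G ω + ξ ω) {ω | m < G ω + ξ ω} -
        (a + c) * (a + b + 2 * c) / m ^ 2)
      =o[atTop] (fun m : ℝ => m ^ (-(2 : ℤ))) := by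
  have hc2 : c ^ 2 < a * b := by
    rw [← sq_abs]; exact (Real.lt_sqrt (abs_nonneg c)).1 hc
  have hs : 0 < a + b + 2 * c := by
    by_contra h
    have h1 : a + b ≤ -(2 * c) := by linarith
    have h2 : (a + b) ^ 2 ≤ (-(2 * c)) ^ 2 := by gcongr
    nlinarith [sq_nonneg (a - b)]
  have hq : ∀ u v : ℝ, 0 ≤ u ^ 2 * a + 2 * u * v * c + v ^ 2 * b := by
    intro u v
    have : 0 ≤ a * (u ^ 2 * a + 2 * u * v * c + v ^ 2 * b) := by
      nlinarith [sq_nonneg (u * a + v * c), mul_nonneg (sq_nonneg v) (sub_nonneg.2 hc2.le)]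
    exact nonneg_of_mul_nonneg_right this ha
  have hind := gauss_indep G ξ hG hξ a b c hs hq hlaw
  set s := a + b + 2 * c with hsdef
  set ρ := (a + c) / s with hρ
  have hρs : ρ * s = a + c := by rw [hρ]; exact div_mul_cancel₀ _ hs.ne'
  set M : Ω → ℝ := fun ω => G ω + ξ ω with hM
  set Z : Ω → ℝ := fun ω => G ω - ρ * M ω with hZ
  have hMm : Measurable M := by fun_prop
  have hZm : Measurable Z := by fun_prop
  have lawM : Measure.map M ℙ = gaussianReal 0 s.toNNReal := by
    have := hlaw 1 1
    rw [show s = 1 ^ 2 * a + 2 * 1 * 1 * c + 1 ^ 2 * b by rw [hsdef]; ring, ← this]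
    simp [hM]
  have lin : ∀ u v : ℝ, MemLp (fun ω => u * G ω + v * ξ ω) 2 ℙ ∧
      ∫ ω, (u * G ω + v * ξ ω) = 0 := by
    intro u v
    constructor
    · have := memLp_id_gaussianReal' (μ := 0)
        (v := Real.toNNReal (u ^ 2 * a + 2 * u * v * c + v ^ 2 * b)) 2 (by simp)
      rw [← hlaw u v, memLp_map_measure_iff (by fun_prop) (by fun_prop)] at this
      exact this
    · have := integral_id_gaussianReal (μ := 0)
        (v := Real.toNNReal (u ^ 2 * a + 2 * u * v * c + v ^ 2 * b))
      rw [← hlaw u v, integral_map (by fun_prop) (by fun_prop)] at this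
      exact this
  have hZeq : Z = fun ω => (1 - ρ) * G ω + (-ρ) * ξ ω := by
    funext ω; simp only [hZ, hM]; ring
  have hMeq : M = fun ω => 1 * G ω + 1 * ξ ω := by
    funext ω; simp only [hM]; ring
  have hZ2 : MemLp Z 2 ℙ := by rw [hZeq]; exact (lin _ _).1
  have hZ0 : ∫ ω, Z ω = 0 := by rw [hZeq]; exact (lin _ _).2
  have hM2 : MemLp M 2 ℙ := by rw [hMeq]; exact (lin _ _).1
  have hZi : Integrable Z ℙ := hZ2.integrable (by norm_num)
  have hMi : Integrable M ℙ := hM2.integrable (by norm_num)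
  have hMMi : Integrable (fun ω => M ω ^ 2) ℙ := hM2.integrable_sq
  have hZMi : Integrable (fun ω => Z ω * M ω) ℙ := hZ2.integrable_mul hM2
  have hset : ∀ m : ℝ, MeasurableSet {ω | m < M ω} := fun m => measurableSet_lt measurable_const hMm
  -- the residual does not contribute
  have res : ∀ (m : ℝ) (f : ℝ → ℝ), Measurable f → ∫ ω in {ω | m < M ω}, Z ω * f (M ω) = 0 := by
    intro m f hf
    have h1 := hind.integral_fun_comp_mul_comp (f := (Set.Ioi m).indicator f) (g := id)
      (by fun_prop) (by fun_prop) (hf.indicator measurableSet_Ioi).aestronglyMeasurable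
      (by fun_prop)
    simp only [id] at h1
    rw [hZ0, mul_zero] at h1
    rw [← integral_indicator (hset m), ← h1]
    congr 1
    funext ω
    by_cases h : m < M ω
    · simp [Set.indicator, h, mul_comm]
    · simp [Set.indicator, h]
  have tm : ∀ (m : ℝ) (hm : 0 < m) (k : ℕ), ∫ ω in {ω | m < M ω}, (M ω - m) ^ k
      = gaussianPDFReal 0 s.toNNReal m / m * (m⁻¹ ^ k * tailJ s k m) := by
    intro m hm k
    rw [← tail_moment hs hm k, ← lawM, setIntegral_map measurableSet_Ioi (by fun_prop) (by fun_prop)]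
    rfl
  have hJ0 := tailJ_tendsto hs 0
  have hJ1 := tailJ_tendsto hs 1
  have hJ2 := tailJ_tendsto hs 2
  have hJ0pos : ∀ᶠ m in atTop, 0 < tailJ s 0 m :=
    hJ0.eventually (lt_mem_nhds (by simpa using hs))
  have form : ∀ᶠ m in atTop, condCovEvent G M {ω | m < M ω}
      = ρ * (tailJ s 2 m / tailJ s 0 m - (tailJ s 1 m / tailJ s 0 m) ^ 2) / m ^ 2 := by
    filter_upwards [hJ0pos, eventually_gt_atTop 0] with m hJ hm
    have t0 := tm m hm 0
    have t1 := tm m hm 1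
    have t2 := tm m hm 2
    set C := gaussianPDFReal 0 s.toNNReal m with hCdef
    have hC : 0 < C := gaussianPDFReal_pos _ _ _ (by simpa using hs)
    set S := {ω | m < M ω} with hS
    have i1 : ∫ ω in S, M ω = (∫ ω in S, (M ω - m) ^ 1) + m * ∫ ω in S, (M ω - m) ^ 0 := by
      simp only [pow_one, pow_zero]
      rw [integral_sub hMi.integrableOn (integrable_const _)]
      simp
      ring
    have i2 : ∫ ω in S, M ω ^ 2 = (∫ ω in S, (M ω - m) ^ 2) + 2 * m * (∫ ω in S, (M ω - m) ^ 1)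
        + m ^ 2 * ∫ ω in S, (M ω - m) ^ 0 := by
      have hi1 : Integrable (fun ω => (M ω - m) ^ 1) ((ℙ : Measure Ω).restrict S) := by
        simp only [pow_one]
        exact hMi.integrableOn.sub (integrable_const _)
      have hi2 : Integrable (fun ω => (M ω - m) ^ 2) ((ℙ : Measure Ω).restrict S) :=
        ((hM2.sub (memLp_const m)).integrable_sq).integrableOn
      have hi0 : Integrable (fun ω => (M ω - m) ^ 0) ((ℙ : Measure Ω).restrict S) := by
        simp only [pow_zero]; exact integrable_const _
      rw [← integral_const_mul, ← integral_const_mul, ← integral_add hi2 (hi1.const_mul _),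
        ← integral_add (f := fun ω => (M ω - m) ^ 2 + 2 * m * (M ω - m) ^ 1)
          (hi2.add (hi1.const_mul _)) (hi0.const_mul _)]
      congr 1
      funext ω
      ring
    have iP : (ℙ S).toReal = ∫ ω in S, (M ω - m) ^ 0 := by
      simp [Measure.real]
    have iG : ∫ ω in S, G ω = ρ * ∫ ω in S, M ω := by
      have r := res m (fun _ => 1) measurable_const
      simp only [mul_one] at r
      rw [← integral_const_mul, ← sub_eq_zero,
        ← integral_sub _ (hMi.integrableOn.const_mul _)]
      · exact r
      · have : G = fun ω => Z ω + ρ * M ω := by funext ω; simp [hZ]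
        rw [this]
        exact hZi.integrableOn.add (hMi.integrableOn.const_mul _)
    have iGM : ∫ ω in S, G ω * M ω = ρ * ∫ ω in S, M ω ^ 2 := by
      have r := res m id measurable_id
      simp only [id] at r
      have e : (fun ω => G ω * M ω) = fun ω => Z ω * M ω + ρ * M ω ^ 2 := by
        funext ω; simp only [hZ]; ring
      rw [e, integral_add hZMi.integrableOn (hMMi.integrableOn.const_mul _), r,
        integral_const_mul, zero_add]
    unfold condCovEvent condExpEvent
    rw [iGM, iG, i2, i1, iP, t0, t1, t2]
    field_simp
    ring
  have lim : Tendsto (fun m => ρ * (tailJ s 2 m / tailJ s 0 m - (tailJ s 1 m / tailJ s 0 m) ^ 2)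
      - (a + c) * s) atTop (nhds 0) := by
    have h0 : ((Nat.factorial 0 : ℕ) : ℝ) * s ^ (0 + 1) ≠ 0 := by simpa using hs.ne'
    have := (((hJ2.div hJ0 h0).sub ((hJ1.div hJ0 h0).pow 2)).const_mul ρ).sub_const ((a + c) * s)
    have e2 : ((Nat.factorial 2 : ℕ) : ℝ) * s ^ (2 + 1) / ((Nat.factorial 0 : ℕ) * s ^ (0 + 1))
        = 2 * s ^ 2 := by
      rw [div_eq_iff h0]; simp; ring
    have e1 : ((Nat.factorial 1 : ℕ) : ℝ) * s ^ (1 + 1) / ((Nat.factorial 0 : ℕ) * s ^ (0 + 1))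
        = s := by
      rw [div_eq_iff h0]; simp; ring
    have e3 : ρ * (2 * s ^ 2 - s ^ 2) - (a + c) * s = 0 := by rw [← hρs]; ring
    rw [e1, e2, e3] at this
    exact this
  rw [isLittleO_iff_tendsto']
  · refine lim.congr' ?_
    filter_upwards [form, eventually_gt_atTop 0] with m hm hpos
    rw [hm, zpow_neg]
    norm_cast
    field_simp
  · filter_upwards [eventually_gt_atTop 0] with m hpos h
    exact absurd h (zpow_ne_zero _ hpos.ne')
end

section
/- For η > 0 and b > 1, as m → ∞: ∫_0^{m-η} exp(-g((m-g)/η)^{b-1}) dg = η^{b-1}/m^{b-1} + 2(b-1)η^{2b-2}/m^{2b-1} + 3(b-1)(3b-2)η^{3b-3}/m^{3b-1} + 8(b-1)(2b-1)(4b-3)η^{4b-4}/m^{4b-1} + o(m^{-(4b-1)}). -/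
open Filter Asymptotics MeasureTheory Real

lemma aux_step (f f' : ℝ → ℝ) (T M : ℝ) (hT : 0 ≤ T)
    (hd : ∀ t ∈ Set.Icc 0 T, HasDerivAt f (f' t) t)
    (hb : ∀ t ∈ Set.Icc 0 T, |f' t| ≤ M) (h0 : f 0 = 0) :
    ∀ t ∈ Set.Icc 0 T, |f t| ≤ M * T := by
  intro t ht
  have hM : 0 ≤ M := (abs_nonneg _).trans (hb 0 ⟨le_rfl, hT⟩)
  have := (convex_Icc (0:ℝ) T).norm_image_sub_le_of_norm_hasDerivWithin_le
    (f := f) (f' := f') (C := M) (fun s hs => (hd s hs).hasDerivWithinAt) hb ⟨le_rfl, hT⟩ ht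
  rw [h0, sub_zero, sub_zero] at this
  refine this.trans ?_
  rw [Real.norm_eq_abs, abs_of_nonneg ht.1]
  exact mul_le_mul_of_nonneg_left ht.2 hM

lemma aux_taylor (f0 f1 f2 f3 f4 : ℝ → ℝ) (T M : ℝ) (hT : 0 ≤ T)
    (h0 : ∀ t ∈ Set.Icc 0 T, HasDerivAt f0 (f1 t) t)
    (h1 : ∀ t ∈ Set.Icc 0 T, HasDerivAt f1 (f2 t) t)
    (h2 : ∀ t ∈ Set.Icc 0 T, HasDerivAt f2 (f3 t) t)
    (h3 : ∀ t ∈ Set.Icc 0 T, HasDerivAt f3 (f4 t) t)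
    (hb : ∀ t ∈ Set.Icc 0 T, |f4 t| ≤ M) :
    |f0 T - (f0 0 + f1 0 * T + f2 0 * T ^ 2 / 2 + f3 0 * T ^ 3 / 6)| ≤ M * T ^ 4 := by
  have e3 := aux_step (fun t => f3 t - f3 0) f4 T M hT
    (fun t ht => (h3 t ht).sub_const _) hb (by simp)
  have e2 := aux_step (fun t => f2 t - (f2 0 + f3 0 * t)) (fun t => f3 t - f3 0) T (M * T) hT
    (fun t ht => by
      have := (h2 t ht).sub (((hasDerivAt_id t).const_mul (f3 0)).const_add (f2 0))
      exact this.congr_deriv (by simp)) e3 (by simp)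
  have e1 := aux_step (fun t => f1 t - (f1 0 + f2 0 * t + f3 0 / 2 * t ^ 2))
    (fun t => f2 t - (f2 0 + f3 0 * t)) T (M * T * T) hT
    (fun t ht => by
      have := (h1 t ht).sub ((((hasDerivAt_id t).const_mul (f2 0)).const_add (f1 0)).add
        ((hasDerivAt_pow 2 t).const_mul (f3 0 / 2)))
      exact this.congr_deriv (by simp; ring)) e2 (by simp)
  have e0 := aux_step (fun t => f0 t - (f0 0 + f1 0 * t + f2 0 / 2 * t ^ 2 + f3 0 / 6 * t ^ 3))
    (fun t => f1 t - (f1 0 + f2 0 * t + f3 0 / 2 * t ^ 2)) T (M * T * T * T) hT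
    (fun t ht => by
      have := (h0 t ht).sub (((((hasDerivAt_id t).const_mul (f1 0)).const_add (f0 0)).add
        ((hasDerivAt_pow 2 t).const_mul (f2 0 / 2))).add
        ((hasDerivAt_pow 3 t).const_mul (f3 0 / 6)))
      exact this.congr_deriv (by simp; ring)) e1 (by simp)
  have := e0 T ⟨hT, le_rfl⟩
  calc _ = _ := by congr 1; ring
    _ ≤ _ := this
    _ = _ := by ring

noncomputable def auxG (a x q t : ℝ) : ℝ := (1 - t * x) ^ q * Real.exp (-x * (1 - t * x) ^ a)

lemma auxG_zero (a x q : ℝ) : auxG a x q 0 = Real.exp (-x) := by simp [auxG]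

lemma auxG_deriv (a x q q1 q2 t : ℝ) (hv : 0 < 1 - t * x) (h1 : q1 = q - 1) (h2 : q2 = q + a - 1) :
    HasDerivAt (auxG a x q) (-q * x * auxG a x q1 t + a * x ^ 2 * auxG a x q2 t) t := by
  have hv' : HasDerivAt (fun t : ℝ => 1 - t * x) (-x) t := by
    simpa using ((hasDerivAt_id t).mul_const x).const_sub 1
  have := (hv'.rpow_const (p := q) (Or.inl hv.ne')).mul
    (((hv'.rpow_const (p := a) (Or.inl hv.ne')).const_mul (-x)).exp)
  refine this.congr_deriv ?_
  have e : (1 - t * x) ^ q2 = (1 - t * x) ^ q * (1 - t * x) ^ (a - 1) := by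
    rw [← Real.rpow_add hv]; congr 1; linarith
  unfold auxG
  rw [e, h1]
  ring

lemma auxG_bound (a x q t : ℝ) (ha : 0 < a) (hx : 0 ≤ x) (ht : 0 ≤ t) (hv : t * x ≤ 1 / 2) :
    |auxG a x q t| ≤ 2 ^ |q| * Real.exp (-(((1:ℝ)/2) ^ a) * x) := by
  have h1 : 1 / 2 ≤ 1 - t * x := by linarith
  have h2 : 1 - t * x ≤ 1 := by nlinarith [mul_nonneg ht hx]
  have h0 : 0 < 1 - t * x := by linarith
  unfold auxG
  rw [abs_of_nonneg (by positivity)]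
  apply mul_le_mul _ _ (by positivity) (by positivity)
  · rcases le_total 0 q with hq | hq
    · rw [abs_of_nonneg hq]
      exact (Real.rpow_le_one h0.le h2 hq).trans (Real.one_le_rpow (by norm_num) hq)
    · rw [abs_of_nonpos hq]
      refine (Real.rpow_le_rpow_of_nonpos (by norm_num) h1 hq).trans (le_of_eq ?_)
      rw [Real.rpow_neg (by norm_num), one_div, Real.inv_rpow (by norm_num)]
  · apply Real.exp_le_exp.2
    have := Real.rpow_le_rpow (by norm_num) h1 ha.le
    nlinarith

noncomputable def auxT (a e x : ℝ) : ℝ :=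
  Real.exp (-x) + a * x ^ 2 * Real.exp (-x) * e
    + (-a * (a - 1) * x ^ 3 + a ^ 2 * x ^ 4) * Real.exp (-x) * e ^ 2 / 2
    + (a * (a - 1) * (a - 2) * x ^ 4 - 3 * a ^ 2 * (a - 1) * x ^ 5 + a ^ 3 * x ^ 6)
      * Real.exp (-x) * e ^ 3 / 6

lemma aux_pt (a : ℝ) (ha : 0 < a) : ∃ K : ℝ, 0 ≤ K ∧ ∀ x e : ℝ, 0 ≤ x → 0 ≤ e → e * x ≤ 1 / 2 →
    |Real.exp (-x * (1 - e * x) ^ a) - auxT a e x| ≤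
      K * (x ^ 5 + x ^ 6 + x ^ 7 + x ^ 8) * Real.exp (-(((1:ℝ)/2) ^ a) * x) * e ^ 4 := by
  obtain ⟨A1, hA1⟩ : ∃ A, A = -a * (a - 1) * (a - 2) * (a - 3) := ⟨_, rfl⟩
  obtain ⟨A2, hA2⟩ : ∃ A, A = a ^ 2 * (a - 1) * (a - 2) + 3 * a ^ 2 * (a - 1) * (2 * a - 3) :=
    ⟨_, rfl⟩
  obtain ⟨A3, hA3⟩ : ∃ A, A = -6 * a ^ 3 * (a - 1) := ⟨_, rfl⟩
  obtain ⟨A4, hA4⟩ : ∃ A, A = a ^ 4 := ⟨_, rfl⟩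
  obtain ⟨K, hK⟩ : ∃ K, K = |A1| * 2 ^ |a - 4| + |A2| * 2 ^ |2 * a - 4| + |A3| * 2 ^ |3 * a - 4|
    + |A4| * 2 ^ |4 * a - 4| := ⟨_, rfl⟩
  have k1 : 0 ≤ |A1| * (2:ℝ) ^ |a - 4| := by positivity
  have k2 : 0 ≤ |A2| * (2:ℝ) ^ |2 * a - 4| := by positivity
  have k3 : 0 ≤ |A3| * (2:ℝ) ^ |3 * a - 4| := by positivity
  have k4 : 0 ≤ |A4| * (2:ℝ) ^ |4 * a - 4| := by positivity
  refine ⟨K, by rw [hK]; positivity, fun x e hx he hex => ?_⟩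
  have hv : ∀ t ∈ Set.Icc 0 e, t * x ≤ 1 / 2 := fun t ht =>
    (mul_le_mul_of_nonneg_right ht.2 hx).trans hex
  have hv0 : ∀ t ∈ Set.Icc 0 e, 0 < 1 - t * x := fun t ht => by linarith [hv t ht]
  have key := aux_taylor (auxG a x 0) (fun t => a * x ^ 2 * auxG a x (a - 1) t)
    (fun t => -a * (a - 1) * x ^ 3 * auxG a x (a - 2) t + a ^ 2 * x ^ 4 * auxG a x (2 * a - 2) t)
    (fun t => a * (a - 1) * (a - 2) * x ^ 4 * auxG a x (a - 3) t
      + -3 * a ^ 2 * (a - 1) * x ^ 5 * auxG a x (2 * a - 3) t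
      + a ^ 3 * x ^ 6 * auxG a x (3 * a - 3) t)
    (fun t => A1 * x ^ 5 * auxG a x (a - 4) t + A2 * x ^ 6 * auxG a x (2 * a - 4) t
      + A3 * x ^ 7 * auxG a x (3 * a - 4) t + A4 * x ^ 8 * auxG a x (4 * a - 4) t)
    e (K * (x ^ 5 + x ^ 6 + x ^ 7 + x ^ 8) * Real.exp (-(((1:ℝ)/2) ^ a) * x)) he
    (fun t ht => by
      refine HasDerivAt.congr_deriv (auxG_deriv a x 0 (-1) (a - 1) t (hv0 t ht) (by ring) (by ring)) ?_
      ring)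
    (fun t ht => by
      refine HasDerivAt.congr_deriv ((auxG_deriv a x (a - 1) (a - 2) (2 * a - 2) t (hv0 t ht) (by ring)
        (by ring)).const_mul (a * x ^ 2)) ?_
      ring)
    (fun t ht => by
      refine HasDerivAt.congr_deriv (((auxG_deriv a x (a - 2) (a - 3) (2 * a - 3) t (hv0 t ht) (by ring)
        (by ring)).const_mul (-a * (a - 1) * x ^ 3)).add
        ((auxG_deriv a x (2 * a - 2) (2 * a - 3) (3 * a - 3) t (hv0 t ht) (by ring)
        (by ring)).const_mul (a ^ 2 * x ^ 4))) ?_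
      ring)
    (fun t ht => by
      refine HasDerivAt.congr_deriv ((((auxG_deriv a x (a - 3) (a - 4) (2 * a - 4) t (hv0 t ht) (by ring)
        (by ring)).const_mul (a * (a - 1) * (a - 2) * x ^ 4)).add
        ((auxG_deriv a x (2 * a - 3) (2 * a - 4) (3 * a - 4) t (hv0 t ht) (by ring)
        (by ring)).const_mul (-3 * a ^ 2 * (a - 1) * x ^ 5))).add
        ((auxG_deriv a x (3 * a - 3) (3 * a - 4) (4 * a - 4) t (hv0 t ht) (by ring)
        (by ring)).const_mul (a ^ 3 * x ^ 6))) ?_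
      rw [hA1, hA2, hA3, hA4]
      ring)
    (fun t ht => by
      have B := fun q => auxG_bound a x q t ha hx ht.1 (hv t ht)
      generalize Real.exp (-(((1:ℝ)/2) ^ a) * x) = E at B ⊢
      have C : ∀ (A q : ℝ) (n : ℕ), |A * x ^ n * auxG a x q t| ≤ |A| * 2 ^ |q| * (x ^ n * E) := by
        intro A q n
        rw [abs_mul, abs_mul, abs_of_nonneg (pow_nonneg hx n)]
        have := mul_le_mul_of_nonneg_left (B q) (by positivity : 0 ≤ |A| * x ^ n)
        linarith
      have hE : 0 ≤ E := by
        have := (abs_nonneg _).trans (B 0)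
        simpa using this
      have c1 := C A1 (a - 4) 5
      have c2 := C A2 (2 * a - 4) 6
      have c3 := C A3 (3 * a - 4) 7
      have c4 := C A4 (4 * a - 4) 8
      have m5 : 0 ≤ x ^ 5 * E := by positivity
      have m6 : 0 ≤ x ^ 6 * E := by positivity
      have m7 : 0 ≤ x ^ 7 * E := by positivity
      have m8 : 0 ≤ x ^ 8 * E := by positivity
      have l1 : |A1| * 2 ^ |a - 4| * (x ^ 5 * E) ≤ K * (x ^ 5 * E) :=
        mul_le_mul_of_nonneg_right (by linarith) m5
      have l2 : |A2| * 2 ^ |2 * a - 4| * (x ^ 6 * E) ≤ K * (x ^ 6 * E) :=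
        mul_le_mul_of_nonneg_right (by linarith) m6
      have l3 : |A3| * 2 ^ |3 * a - 4| * (x ^ 7 * E) ≤ K * (x ^ 7 * E) :=
        mul_le_mul_of_nonneg_right (by linarith) m7
      have l4 : |A4| * 2 ^ |4 * a - 4| * (x ^ 8 * E) ≤ K * (x ^ 8 * E) :=
        mul_le_mul_of_nonneg_right (by linarith) m8
      refine (abs_add_le _ _).trans ?_
      refine (add_le_add_left (abs_add_le _ _) _).trans ?_
      have := abs_add_le (A1 * x ^ 5 * auxG a x (a - 4) t) (A2 * x ^ 6 * auxG a x (2 * a - 4) t)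
      linarith)
  simp only [auxG_zero] at key
  have e0 : auxG a x 0 e = Real.exp (-x * (1 - e * x) ^ a) := by simp [auxG]
  rw [e0] at key
  refine le_trans (le_of_eq ?_) key
  congr 1
  unfold auxT
  ring

def auxI (f : ℝ → ℝ) (v : ℝ) : Prop :=
  IntegrableOn f (Set.Ioi 0) ∧ ∫ x in Set.Ioi (0:ℝ), f x = v

lemma auxI.add {f g : ℝ → ℝ} {v w : ℝ} (hf : auxI f v) (hg : auxI g w) :
    auxI (fun x => f x + g x) (v + w) :=
  ⟨hf.1.add hg.1, by rw [integral_add hf.1 hg.1, hf.2, hg.2]⟩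

lemma auxI.cmul {f : ℝ → ℝ} {v : ℝ} (hf : auxI f v) (c : ℝ) :
    auxI (fun x => c * f x) (c * v) :=
  ⟨hf.1.const_mul c, by rw [integral_const_mul, hf.2]⟩

lemma auxI.congr {f g : ℝ → ℝ} {v w : ℝ} (hf : auxI f v) (h : ∀ x, g x = f x) (h' : w = v) :
    auxI g w := by
  obtain rfl : g = f := funext h
  rw [h']; exact hf

lemma aux_int (n : ℕ) (c : ℝ) (hc : 0 < c) :
    IntegrableOn (fun x : ℝ => x ^ n * Real.exp (-c * x)) (Set.Ioi 0) := by
  have := integrableOn_rpow_mul_exp_neg_mul_rpow (p := 1) (s := n) (b := c)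
    (by linarith [(Nat.cast_nonneg n : (0:ℝ) ≤ n)]) one_pos hc
  simpa using this

lemma aux_mom (n : ℕ) : auxI (fun x : ℝ => x ^ n * Real.exp (-x)) n.factorial := by
  refine ⟨by simpa using aux_int n 1 one_pos, ?_⟩
  have := Real.integral_rpow_mul_exp_neg_mul_Ioi (a := n + 1) (r := 1) (by positivity) one_pos
  rw [Real.Gamma_nat_eq_factorial] at this
  simpa using this

lemma aux_T (a e : ℝ) : auxI (auxT a e)
    (1 + 2 * a * e + 3 * a * (3 * a + 1) * e ^ 2
      + 8 * a * (2 * a + 1) * (4 * a + 1) * e ^ 3) := by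
  refine auxI.congr (((((((aux_mom 0).add ((aux_mom 2).cmul (a * e))).add
    ((aux_mom 3).cmul (-a * (a - 1) * e ^ 2 / 2))).add
    ((aux_mom 4).cmul (a ^ 2 * e ^ 2 / 2))).add
    ((aux_mom 4).cmul (a * (a - 1) * (a - 2) * e ^ 3 / 6))).add
    ((aux_mom 5).cmul (-3 * a ^ 2 * (a - 1) * e ^ 3 / 6))).add
    ((aux_mom 6).cmul (a ^ 3 * e ^ 3 / 6))) ?_ ?_
  · intro x
    unfold auxT
    ring
  · norm_num [Nat.factorial]
    ring

lemma aux_C (a : ℝ) (ha : 0 < a) : ∃ C : ℝ, ∀ e : ℝ, 0 < e → e ≤ 1 →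
    |(∫ x in Set.Ioc 0 (1 / (2 * e)), Real.exp (-x * (1 - e * x) ^ a)) -
      (1 + 2 * a * e + 3 * a * (3 * a + 1) * e ^ 2
      + 8 * a * (2 * a + 1) * (4 * a + 1) * e ^ 3)| ≤ C * e ^ 4 := by
  obtain ⟨K, hK0, hK⟩ := aux_pt a ha
  obtain ⟨c, hc⟩ : ∃ c, c = ((1:ℝ)/2) ^ a := ⟨_, rfl⟩
  have hc0 : 0 < c := by rw [hc]; positivity
  rw [← hc] at hK
  obtain ⟨t1, ht1⟩ : ∃ t : ℝ → ℝ, t = fun x => a * x ^ 2 * Real.exp (-x) := ⟨_, rfl⟩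
  obtain ⟨t2, ht2⟩ : ∃ t : ℝ → ℝ, t = fun x =>
    (-a * (a - 1) * x ^ 3 + a ^ 2 * x ^ 4) * Real.exp (-x) := ⟨_, rfl⟩
  obtain ⟨t3, ht3⟩ : ∃ t : ℝ → ℝ, t = fun x =>
    (a * (a - 1) * (a - 2) * x ^ 4 - 3 * a ^ 2 * (a - 1) * x ^ 5 + a ^ 3 * x ^ 6)
      * Real.exp (-x) := ⟨_, rfl⟩
  have i1 : IntegrableOn (fun x => x ^ 4 * t1 x) (Set.Ioi 0) :=
    (((aux_mom 6).cmul a).congr (w := _) (fun x => by rw [ht1]; ring) rfl).1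
  have i2 : IntegrableOn (fun x => x ^ 4 * t2 x) (Set.Ioi 0) :=
    ((((aux_mom 7).cmul (-a * (a - 1))).add ((aux_mom 8).cmul (a ^ 2))).congr (w := _)
      (fun x => by rw [ht2]; ring) rfl).1
  have i3 : IntegrableOn (fun x => x ^ 4 * t3 x) (Set.Ioi 0) :=
    (((((aux_mom 8).cmul (a * (a - 1) * (a - 2))).add
      ((aux_mom 9).cmul (-3 * a ^ 2 * (a - 1)))).add ((aux_mom 10).cmul (a ^ 3))).congr (w := _)
      (fun x => by rw [ht3]; ring) rfl).1
  obtain ⟨U, hU⟩ : ∃ U : ℝ → ℝ, U = fun x =>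
    K * (x ^ 5 * Real.exp (-c * x) + x ^ 6 * Real.exp (-c * x) + x ^ 7 * Real.exp (-c * x)
      + x ^ 8 * Real.exp (-c * x)) := ⟨_, rfl⟩
  obtain ⟨V, hV⟩ : ∃ V : ℝ → ℝ, V = fun x =>
    16 * (x ^ 4 * Real.exp (-x) + |x ^ 4 * t1 x| + |x ^ 4 * t2 x| + |x ^ 4 * t3 x|) := ⟨_, rfl⟩
  have iU : IntegrableOn U (Set.Ioi 0) := by
    rw [hU]
    exact ((((aux_int 5 c hc0).add (aux_int 6 c hc0)).add (aux_int 7 c hc0)).add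
      (aux_int 8 c hc0)).const_mul K
  have iV : IntegrableOn V (Set.Ioi 0) := by
    rw [hV]
    exact ((((aux_mom 4).1.add i1.abs).add i2.abs).add i3.abs).const_mul 16
  have U0 : ∀ x, 0 < x → 0 ≤ U x := fun x hx => by rw [hU]; positivity
  have V0 : ∀ x, 0 < x → 0 ≤ V x := fun x hx => by rw [hV]; positivity
  refine ⟨∫ x in Set.Ioi (0:ℝ), (U x + V x), fun e he he1 => ?_⟩
  obtain ⟨hTi, hTv⟩ := aux_T a e
  rw [← hTv]
  have hcont : Continuous (fun x : ℝ => Real.exp (-x * (1 - e * x) ^ a)) := by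
    have : Continuous (fun x : ℝ => (1 - e * x) ^ a) :=
      (by fun_prop : Continuous (fun x : ℝ => 1 - e * x)).rpow_const (fun x => Or.inr ha.le)
    fun_prop
  have hsub : Set.Ioc 0 (1 / (2 * e)) ⊆ Set.Ioi (0:ℝ) := fun x hx => hx.1
  have hEi : IntegrableOn ((Set.Ioc 0 (1 / (2 * e))).indicator
      (fun x : ℝ => Real.exp (-x * (1 - e * x) ^ a))) (Set.Ioi 0) := by
    apply IntegrableOn.integrable_indicator _ measurableSet_Ioc |>.integrableOn
    exact hcont.integrableOn_Ioc
  have hEe : ∫ x in Set.Ioc 0 (1 / (2 * e)), Real.exp (-x * (1 - e * x) ^ a) =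
      ∫ x in Set.Ioi (0:ℝ), (Set.Ioc 0 (1 / (2 * e))).indicator
      (fun x : ℝ => Real.exp (-x * (1 - e * x) ^ a)) x := by
    rw [setIntegral_indicator measurableSet_Ioc, Set.inter_eq_right.2 hsub]
  rw [hEe, ← integral_sub hEi hTi, ← integral_mul_const]
  rw [← Real.norm_eq_abs]
  refine norm_integral_le_of_norm_le ((iU.add iV).mul_const _) ?_
  refine (ae_restrict_iff' measurableSet_Ioi).2 (Eventually.of_forall fun x hx => ?_)
  have hx0 : 0 < x := hx
  rw [Real.norm_eq_abs]
  have e4 : 0 < e ^ 4 := by positivity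
  by_cases hxe : x ≤ 1 / (2 * e)
  · rw [Set.indicator_of_mem (show x ∈ Set.Ioc 0 (1 / (2 * e)) from ⟨hx0, hxe⟩)]
    have h1 : e * x ≤ 1 / 2 := by
      rw [le_div_iff₀ (by positivity)] at hxe
      linarith
    refine (hK x e hx0.le he.le h1).trans ?_
    have h2 : K * (x ^ 5 + x ^ 6 + x ^ 7 + x ^ 8) * Real.exp (-c * x) = U x := by
      rw [hU]; ring
    rw [h2]
    exact mul_le_mul_of_nonneg_right (by linarith [V0 x hx0]) e4.le
  · rw [Set.indicator_of_notMem (fun h => hxe h.2), zero_sub, abs_neg]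
    have h1 : 1 ≤ 2 * (e * x) := by
      rw [not_le, div_lt_iff₀ (by positivity)] at hxe
      linarith
    have h2 : 1 ≤ 16 * x ^ 4 * e ^ 4 := by
      have := one_le_pow₀ (n := 4) h1
      calc (1:ℝ) ≤ _ := this
        _ = _ := by ring
    have h3 : |auxT a e x| ≤ Real.exp (-x) + |t1 x| + |t2 x| + |t3 x| := by
      have : auxT a e x = Real.exp (-x) + t1 x * e + t2 x * (e ^ 2 / 2) + t3 x * (e ^ 3 / 6) := by
        rw [ht1, ht2, ht3]; unfold auxT; ring
      rw [this]
      have q2 : e ^ 2 ≤ 1 := pow_le_one₀ he.le he1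
      have q3 : e ^ 3 ≤ 1 := pow_le_one₀ he.le he1
      have key : ∀ t r : ℝ, 0 ≤ r → r ≤ 1 → |t * r| ≤ |t| := fun t r h h' => by
        rw [abs_mul, abs_of_nonneg h]
        exact mul_le_of_le_one_right (abs_nonneg _) h'
      have s1 := key (t1 x) e he.le he1
      have s2 := key (t2 x) (e ^ 2 / 2) (by positivity) (by linarith)
      have s3 := key (t3 x) (e ^ 3 / 6) (by positivity) (by linarith)
      have s0 : |Real.exp (-x)| = Real.exp (-x) := abs_of_nonneg (by positivity)
      refine (abs_add_le _ _).trans (add_le_add ?_ s3)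
      refine (abs_add_le _ _).trans (add_le_add ?_ s2)
      refine (abs_add_le _ _).trans (add_le_add s0.le s1)
    have h4 : V x * e ^ 4 = (16 * x ^ 4 * e ^ 4) *
        (Real.exp (-x) + |t1 x| + |t2 x| + |t3 x|) := by
      rw [hV]
      simp only [abs_mul, abs_of_pos (pow_pos hx0 4)]
      ring
    have h5 : Real.exp (-x) + |t1 x| + |t2 x| + |t3 x| ≤ V x * e ^ 4 := by
      rw [h4]
      exact le_mul_of_one_le_left (by positivity) h2
    have h6 := mul_nonneg (U0 x hx0) e4.le
    rw [add_mul]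
    linarith

lemma aux_D (η b : ℝ) (hη : 0 < η) (hb : 1 < b) : ∃ C : ℝ, ∀ m : ℝ, 1 ≤ m → 2 * η ≤ m →
    η ^ (b - 1) ≤ m ^ b →
    |(∫ g in Set.Ioc (0 : ℝ) (m - η), Real.exp (-g * ((m - g) / η) ^ (b - 1))) -
          (η ^ (b - 1) / m ^ (b - 1)
            + 2 * (b - 1) * η ^ (2 * b - 2) / m ^ (2 * b - 1)
            + 3 * (b - 1) * (3 * b - 2) * η ^ (3 * b - 3) / m ^ (3 * b - 1)
            + 8 * (b - 1) * (2 * b - 1) * (4 * b - 3) * η ^ (4 * b - 4) / m ^ (4 * b - 1))|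
      ≤ C * (m ^ (-(4 * b - 1)) * m ^ (-b)) + m * Real.exp (-(1 / 2) * m) := by
  have ha : 0 < b - 1 := by linarith
  obtain ⟨C, hC⟩ := aux_C (b - 1) ha
  refine ⟨C * (η ^ (b - 1)) ^ 5, fun m hm1 hmη hmb => ?_⟩
  have hm : 0 < m := by linarith
  obtain ⟨p, hp⟩ : ∃ p, p = η ^ (b - 1) := ⟨_, rfl⟩
  obtain ⟨u, hu⟩ : ∃ u, u = m ^ (b - 1) := ⟨_, rfl⟩
  have hp0 : 0 < p := by rw [hp]; positivity
  have hu0 : 0 < u := by rw [hu]; positivity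
  have p2 : η ^ (2 * b - 2) = p ^ 2 := by
    rw [hp, ← Real.rpow_mul_natCast hη.le]; congr 1; push_cast; ring
  have p3 : η ^ (3 * b - 3) = p ^ 3 := by
    rw [hp, ← Real.rpow_mul_natCast hη.le]; congr 1; push_cast; ring
  have p4 : η ^ (4 * b - 4) = p ^ 4 := by
    rw [hp, ← Real.rpow_mul_natCast hη.le]; congr 1; push_cast; ring
  have um : ∀ (n k : ℕ) (s : ℝ), s = (b - 1) * n + k → m ^ s = u ^ n * m ^ k := by
    intro n k s hs
    rw [hu, ← Real.rpow_mul_natCast hm.le, ← Real.rpow_natCast m k, ← Real.rpow_add hm, hs]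
  have u1 : m ^ b = u * m := by simpa using um 1 1 b (by push_cast; ring)
  have u2 := um 2 1 (2 * b - 1) (by push_cast; ring)
  have u3 := um 3 2 (3 * b - 1) (by push_cast; ring)
  have u4 := um 4 3 (4 * b - 1) (by push_cast; ring)
  rw [Real.rpow_neg hm.le, Real.rpow_neg hm.le, p2, p3, p4, u2, u3, u4, u1, ← hp, ← hu]
  rw [u1, ← hp] at hmb
  obtain ⟨l, hl⟩ : ∃ l, l = u / p := ⟨_, rfl⟩
  have hl0 : 0 < l := by rw [hl]; positivity
  have hl' : l = (m / η) ^ (b - 1) := by rw [hl, hu, hp, Real.div_rpow hm.le hη.le]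
  obtain ⟨e, he⟩ : ∃ e, e = p / (u * m) := ⟨_, rfl⟩
  have he0 : 0 < e := by rw [he]; positivity
  have he1 : e ≤ 1 := by rw [he]; exact div_le_one_of_le₀ hmb (by positivity)
  have hem : e * (l * m) = 1 := by rw [he, hl]; field_simp
  have hX : 1 / (2 * e) = l * m / 2 := by
    rw [div_eq_div_iff (by positivity) (by positivity)]; linarith
  have hJ := hC e he0 he1
  obtain ⟨f, hf⟩ : ∃ f : ℝ → ℝ, f = fun g => Real.exp (-g * ((m - g) / η) ^ (b - 1)) := ⟨_, rfl⟩
  have hcont : Continuous f := by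
    have : Continuous (fun g : ℝ => ((m - g) / η) ^ (b - 1)) :=
      (by fun_prop : Continuous (fun g : ℝ => (m - g) / η)).rpow_const (fun x => Or.inr ha.le)
    rw [hf]
    fun_prop
  have hJ2 : ∫ x in Set.Ioc 0 (1 / (2 * e)), Real.exp (-x * (1 - e * x) ^ (b - 1)) =
      l * ∫ g in (0:ℝ)..(m / 2), f g := by
    have h1 := intervalIntegral.integral_comp_div (a := 0) (b := 1 / (2 * e)) f hl0.ne'
    have h2 : 1 / (2 * e) / l = m / 2 := by rw [hX]; field_simp
    rw [h2, zero_div, smul_eq_mul] at h1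
    rw [← h1, intervalIntegral.integral_of_le (by positivity)]
    refine setIntegral_congr_fun measurableSet_Ioc fun x hx => ?_
    have h3 : 0 ≤ 1 - e * x := by
      have := (le_div_iff₀ (by positivity)).1 hx.2
      have := mul_pos he0 hx.1
      linarith
    have h4 : (m - x / l) / η = (m / η) * (1 - e * x) := by
      have : e = 1 / (l * m) := by rw [eq_div_iff (by positivity)]; exact hem
      rw [this]; field_simp
    simp only [hf]
    rw [h4, Real.mul_rpow (by positivity) h3, ← hl']
    congr 1
    field_simp
  have hsplit : ∫ g in Set.Ioc (0 : ℝ) (m - η), f g =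
      (∫ g in (0:ℝ)..(m / 2), f g) + ∫ g in (m / 2)..(m - η), f g := by
    rw [intervalIntegral.integral_add_adjacent_intervals (hcont.intervalIntegrable _ _)
      (hcont.intervalIntegrable _ _), intervalIntegral.integral_of_le (by linarith)]
  have hR : |∫ g in (m / 2)..(m - η), f g| ≤ m * Real.exp (-(1 / 2) * m) := by
    have := intervalIntegral.norm_integral_le_of_norm_le_const (a := m / 2) (b := m - η)
      (f := f) (C := Real.exp (-(1 / 2) * m)) (fun g hg => by
        rw [Set.uIoc_of_le (by linarith)] at hg
        have h1 : 1 ≤ (m - g) / η := by rw [le_div_iff₀ hη]; linarith [hg.2]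
        have h2 := Real.one_le_rpow h1 ha.le
        rw [hf, Real.norm_eq_abs, abs_of_pos (Real.exp_pos _)]
        apply Real.exp_le_exp.2
        have : m / 2 < g := hg.1
        nlinarith)
    rw [Real.norm_eq_abs, abs_of_nonneg (by linarith : 0 ≤ m - η - m / 2)] at this
    refine this.trans ?_
    rw [mul_comm]
    exact mul_le_mul_of_nonneg_right (by linarith) (Real.exp_pos _).le
  rw [hJ2] at hJ
  have hfI : (∫ g in Set.Ioc (0 : ℝ) (m - η), Real.exp (-g * ((m - g) / η) ^ (b - 1))) =
    ∫ g in Set.Ioc (0 : ℝ) (m - η), f g := by rw [hf]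
  rw [hfI, hsplit]
  generalize (∫ g in (0:ℝ)..(m / 2), f g) = J at hJ ⊢
  generalize (∫ g in (m / 2)..(m - η), f g) = R at hR ⊢
  obtain ⟨S, hS⟩ : ∃ S, S = (1 + 2 * (b - 1) * e + 3 * (b - 1) * (3 * (b - 1) + 1) * e ^ 2
      + 8 * (b - 1) * (2 * (b - 1) + 1) * (4 * (b - 1) + 1) * e ^ 3) := ⟨_, rfl⟩
  rw [← hS] at hJ
  have hSt : p / u + 2 * (b - 1) * p ^ 2 / (u ^ 2 * m ^ 1)
      + 3 * (b - 1) * (3 * b - 2) * p ^ 3 / (u ^ 3 * m ^ 2)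
      + 8 * (b - 1) * (2 * b - 1) * (4 * b - 3) * p ^ 4 / (u ^ 4 * m ^ 3) = p / u * S := by
    rw [hS, he]; field_simp; ring
  rw [hSt]
  have hfin : J + R - p / u * S = p / u * (l * J - S) + R := by
    rw [hl]; field_simp; ring
  rw [hfin]
  refine (abs_add_le _ _).trans (add_le_add ?_ hR)
  rw [abs_mul, abs_of_pos (by positivity : 0 < p / u)]
  refine (mul_le_mul_of_nonneg_left hJ (by positivity)).trans (le_of_eq ?_)
  rw [he]; field_simp

/-- Asymptotic expansion, for `η > 0` and `b > 1`, of
`∫_0^{m-η} exp(-g((m-g)/η)^{b-1}) dg` as `m → ∞`. -/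
theorem integral_exp_expansion (η b : ℝ) (hη : 0 < η) (hb : 1 < b) :
    (fun m : ℝ =>
        (∫ g in Set.Ioc (0 : ℝ) (m - η), Real.exp (-g * ((m - g) / η) ^ (b - 1))) -
          (η ^ (b - 1) / m ^ (b - 1)
            + 2 * (b - 1) * η ^ (2 * b - 2) / m ^ (2 * b - 1)
            + 3 * (b - 1) * (3 * b - 2) * η ^ (3 * b - 3) / m ^ (3 * b - 1)
            + 8 * (b - 1) * (2 * b - 1) * (4 * b - 3) * η ^ (4 * b - 4) / m ^ (4 * b - 1)))
      =o[atTop] (fun m : ℝ => m ^ (-(4 * b - 1))) := by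
  obtain ⟨C, hC⟩ := aux_D η b hη hb
  have hO : (fun m : ℝ => C * (m ^ (-(4 * b - 1)) * m ^ (-b)) + m * Real.exp (-(1 / 2) * m))
      =o[atTop] (fun m : ℝ => m ^ (-(4 * b - 1))) := by
    refine IsLittleO.add (IsLittleO.const_mul_left ?_ C) ?_
    · have h1 : (fun m : ℝ => m ^ (-b)) =o[atTop] (fun _ : ℝ => (1:ℝ)) :=
        (isLittleO_one_iff ℝ).2 (tendsto_rpow_neg_atTop (by linarith))
      simpa using (isBigO_refl (fun m : ℝ => m ^ (-(4 * b - 1))) atTop).mul_isLittleO h1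
    · have h1 := isLittleO_exp_neg_mul_rpow_atTop (a := 1 / 2) (by norm_num) (-(4 * b))
      have h2 := (isBigO_refl (fun m : ℝ => m) atTop).mul_isLittleO h1
      refine h2.congr' (EventuallyEq.refl _ _) ?_
      filter_upwards [eventually_gt_atTop 0] with m hm
      rw [show -(4 * b - 1) = 1 + -(4 * b) by ring, Real.rpow_add hm, Real.rpow_one]
  refine IsBigO.trans_isLittleO (IsBigO.of_bound 1 ?_) hO
  have hlim := (tendsto_rpow_atTop (show 0 < b by linarith)).eventually_ge_atTop (η ^ (b - 1))
  filter_upwards [eventually_ge_atTop 1, eventually_ge_atTop (2 * η), hlim] with m h1 h2 h3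
  rw [one_mul, Real.norm_eq_abs, Real.norm_eq_abs]
  exact (hC m h1 h2 h3).trans (le_abs_self _)
end

section
/- For η > 0 and b > 1, as m → ∞: ∫_0^{m-η} g·exp(-g((m-g)/η)^{b-1}) dg = η^{2b-2}/m^{2b-2} + 6(b-1)η^{3b-3}/m^{3b-2} + 12(b-1)(4b-3)η^{4b-4}/m^{4b-2} + o(m^{-(4b-2)}). -/
open Filter Asymptotics MeasureTheory Real


lemma aux_mvt (f f' : ℝ → ℝ) (K : ℝ) (n : ℕ) (hK : 0 ≤ K) (h0 : f 0 = 0)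
    (hd : ∀ x ∈ Set.Icc (0:ℝ) (1/2), HasDerivAt f (f' x) x)
    (hb : ∀ x ∈ Set.Icc (0:ℝ) (1/2), |f' x| ≤ K * x ^ n) :
    ∀ x ∈ Set.Icc (0:ℝ) (1/2), |f x| ≤ K * x ^ (n+1) := by
  intro x hx
  have h := Convex.norm_image_sub_le_of_norm_hasDerivWithin_le (f := f) (f' := f') (C := K * x ^ n)
    (s := Set.Icc 0 x) (x := 0) (y := x)
    (fun y hy => (hd y ⟨hy.1, hy.2.trans hx.2⟩).hasDerivWithinAt)
    (fun y hy => (hb y ⟨hy.1, hy.2.trans hx.2⟩).trans (by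
      have := pow_le_pow_left₀ hy.1 hy.2 n
      gcongr)) (convex_Icc 0 x) ⟨le_rfl, hx.1⟩ ⟨hx.1, le_rfl⟩
  rw [h0, sub_zero, sub_zero, Real.norm_eq_abs, Real.norm_eq_abs, abs_of_nonneg hx.1] at h
  calc _ ≤ _ := h
    _ = _ := by ring

lemma hda (c : ℝ) (x : ℝ) (hx : x ∈ Set.Icc (0:ℝ) (1/2)) :
    HasDerivAt (fun s : ℝ => (1 - s) ^ c) (-(c * (1 - x) ^ (c - 1))) x := by
  have h1 : HasDerivAt (fun s : ℝ => 1 - s) (-1) x := by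
    simpa using (hasDerivAt_id x).const_sub 1
  have := h1.rpow_const (p := c) (Or.inl (by have := hx.2; linarith))
  convert this using 1
  ring

lemma auxA (c : ℝ) : ∃ K : ℝ, 0 ≤ K ∧ ∀ s ∈ Set.Icc (0:ℝ) (1/2),
    |1 - (1-s)^c - c*s + c*(c-1)/2*s^2| ≤ K * s^3 := by
  have hc : ContinuousOn (fun s : ℝ => c*(c-1)*(c-2)*(1-s)^(c-3)) (Set.Icc (0:ℝ) (1/2)) := by
    refine ContinuousOn.mul continuousOn_const (ContinuousOn.rpow_const (by fun_prop) ?_)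
    intro x hx; left; have := hx.2; linarith
  obtain ⟨K, hK⟩ := isCompact_Icc.exists_bound_of_continuousOn hc
  have hK0 : 0 ≤ K := (norm_nonneg _).trans (hK 0 ⟨le_rfl, by norm_num⟩)
  refine ⟨K, hK0, ?_⟩
  have e1 : c - 1 - 1 = c - 2 := by ring
  have e2 : c - 2 - 1 = c - 3 := by ring
  refine aux_mvt _ (fun s => c * (1-s)^(c-1) - c + c*(c-1)*s) K 2 hK0 (by simp) ?_ ?_
  · intro x hx
    have h := (((hda c x hx).const_sub 1).sub ((hasDerivAt_id x).const_mul c)).add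
      (((hasDerivAt_id x).pow 2).const_mul (c*(c-1)/2))
    refine HasDerivAt.congr_deriv h ?_
    simp; ring
  refine aux_mvt _ (fun s => -(c * ((c-1) * (1-s)^(c-2))) + c*(c-1)) K 1 hK0 (by simp) ?_ ?_
  · intro x hx
    have h := (((hda (c-1) x hx).const_mul c).sub_const c).add
      ((hasDerivAt_id x).const_mul (c*(c-1)))
    refine HasDerivAt.congr_deriv h ?_
    rw [e1]; ring
  refine aux_mvt _ (fun s => c*(c-1)*(c-2)*(1-s)^(c-3)) K 0 hK0 (by simp) ?_ ?_
  · intro x hx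
    have h := ((((hda (c-2) x hx).const_mul (c-1)).const_mul c).neg).add_const (c*(c-1))
    refine HasDerivAt.congr_deriv h ?_
    rw [e2]; ring
  · intro x hx
    simpa using hK x hx

lemma exp_rem (v : ℝ) (hv : 0 ≤ v) : |Real.exp v - 1 - v - v^2/2| ≤ v^3 * Real.exp v := by
  have h := Complex.norm_exp_sub_sum_le_norm_mul_exp (v:ℂ) 3
  have e : Complex.exp v - ∑ m ∈ Finset.range 3, (v:ℂ)^m / (m.factorial) 
      = ((Real.exp v - 1 - v - v^2/2 : ℝ) : ℂ) := by
    simp [Finset.sum_range_succ]; ring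
  rw [e, Complex.norm_real, Complex.norm_real, Real.norm_eq_abs, Real.norm_eq_abs, abs_of_nonneg hv] at h
  exact h

lemma poly_exp (δ : ℝ) (hδ : 0 < δ) : ∃ M : ℝ, 0 < M ∧ ∀ T : ℝ, 0 ≤ T →
    (1+T)^3 * Real.exp (-(2*δ)*T) ≤ M * Real.exp (-δ*T) := by
  refine ⟨(1+3/δ)^3, by positivity, fun T hT => ?_⟩
  have h1 : 1 + T ≤ (1+3/δ) * Real.exp (δ*T/3) := by
    calc 1 + T ≤ (1+3/δ) * (δ*T/3+1) := by
          have : (1+3/δ) * (δ*T/3+1) = 1 + T + (δ*T/3 + 3/δ) := by field_simp; ring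
          rw [this]
          have : 0 ≤ δ*T/3 + 3/δ := by positivity
          linarith
      _ ≤ _ := by gcongr; exact Real.add_one_le_exp _
  calc _ ≤ ((1+3/δ) * Real.exp (δ*T/3))^3 * Real.exp (-(2*δ)*T) := by gcongr
    _ = (1+3/δ)^3 * (Real.exp (δ*T/3)^3 * Real.exp (-(2*δ)*T)) := by ring
    _ = _ := by
      rw [← Real.exp_nat_mul, ← Real.exp_add]
      congr 2; push_cast; ring

lemma core1 (c : ℝ) (hc : 0 < c) : ∃ C δ : ℝ, 0 < δ ∧ δ ≤ 1 ∧ 0 ≤ C ∧ ∀ T s : ℝ, 0 ≤ T →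
    s ∈ Set.Icc (0:ℝ) (1/2) →
    |Real.exp (-T * (1-s)^c) - Real.exp (-T) * (1 + c*T*s + (c^2*T^2/2 - c*(c-1)/2*T)*s^2)|
      ≤ C * s^3 * ((1+T)^3 * Real.exp (-δ*T)) := by
  obtain ⟨K, hK0, hK⟩ := auxA c
  set L : ℝ := c + |c*(c-1)/2| + K with hL
  have hL0 : 0 ≤ L := by positivity
  refine ⟨L^3 + K + (|c*(c-1)/2| + K) * (L + c), (1/2)^c, by positivity,
    Real.rpow_le_one (by norm_num) (by norm_num) hc.le, by positivity, ?_⟩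
  intro T s hT hs
  have hs0 := hs.1
  have hs1 : s ≤ 1 := hs.2.trans (by norm_num)
  set u : ℝ := 1 - (1-s)^c with hu
  have hk := hK s hs
  rw [← hu] at hk
  have hu0 : 0 ≤ u := by
    have := Real.rpow_le_one (x := 1 - s) (z := c) (by linarith) (by linarith) hc.le
    linarith
  have hs2 : s^2 ≤ s := by nlinarith
  have hs3 : s^3 ≤ s^2 := by nlinarith [sq_nonneg s]
  have hucs : |u - c*s| ≤ (|c*(c-1)/2| + K) * s^2 := by
    have : u - c*s = (u - c*s + c*(c-1)/2*s^2) - c*(c-1)/2*s^2 := by ring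
    rw [this]
    refine (abs_sub _ _).trans ?_
    rw [abs_mul (c*(c-1)/2), abs_of_nonneg (sq_nonneg s)]
    nlinarith
  have hul : u ≤ L * s := by
    have := le_of_abs_le hucs
    have : (|c*(c-1)/2| + K) * s^2 ≤ (|c*(c-1)/2| + K) * s := by gcongr
    rw [hL]; linarith
  have hexp : Real.exp (-T * (1-s)^c) = Real.exp (-T) * Real.exp (T*u) := by
    rw [← Real.exp_add]; congr 1; rw [hu]; ring
  have hexple : Real.exp (-T * (1-s)^c) ≤ Real.exp (-(1/2)^c*T) := by
    apply Real.exp_le_exp.2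
    have : ((1:ℝ)/2)^c ≤ (1-s)^c := Real.rpow_le_rpow (by norm_num) (by linarith [hs.2]) hc.le
    nlinarith
  have hle2 : Real.exp (-T) ≤ Real.exp (-(1/2)^c*T) := by
    apply Real.exp_le_exp.2
    have : ((1:ℝ)/2)^c ≤ 1 := Real.rpow_le_one (by norm_num) (by norm_num) hc.le
    nlinarith
  set E := Real.exp (-(1/2)^c*T) with hE
  have hE0 : 0 < E := Real.exp_pos _
  have hT1 : T ≤ (1+T)^3 := by nlinarith [pow_nonneg hT 2, pow_nonneg hT 3]
  have hT2 : T^2 ≤ (1+T)^3 := by nlinarith [pow_nonneg hT 2, pow_nonneg hT 3]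
  have hT3 : T^3 ≤ (1+T)^3 := by nlinarith [pow_nonneg hT 2, pow_nonneg hT 3]
  have A1 : |Real.exp (-T) * (Real.exp (T*u) - 1 - T*u - (T*u)^2/2)| ≤ L^3 * s^3 * ((1+T)^3*E) := by
    rw [abs_mul, abs_of_pos (Real.exp_pos _)]
    calc _ ≤ Real.exp (-T) * ((T*u)^3 * Real.exp (T*u)) := by
          gcongr; exact exp_rem _ (by positivity)
      _ = T^3 * u^3 * Real.exp (-T * (1-s)^c) := by rw [hexp]; ring
      _ ≤ (1+T)^3 * (L*s)^3 * E := by gcongr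
      _ = _ := by ring
  have A2 : |Real.exp (-T) * (T * (u - c*s + c*(c-1)/2*s^2))| ≤ K * s^3 * ((1+T)^3*E) := by
    rw [abs_mul, abs_of_pos (Real.exp_pos _), abs_mul, abs_of_nonneg hT]
    calc _ ≤ E * ((1+T)^3 * (K*s^3)) := by gcongr
      _ = _ := by ring
  have A3 : |Real.exp (-T) * (T^2/2 * ((u - c*s) * (u+c*s)))| ≤
      (|c*(c-1)/2| + K) * (L + c) * s^3 * ((1+T)^3*E) := by
    rw [abs_mul, abs_of_pos (Real.exp_pos _), abs_mul, abs_mul, abs_of_nonneg (a := T^2/2) (by positivity),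
      abs_of_nonneg (a := u + c*s) (by positivity)]
    calc _ ≤ E * ((1+T)^3 * (((|c*(c-1)/2| + K) * s^2) * (L*s+c*s))) := by
          gcongr
          linarith [sq_nonneg T]
      _ = _ := by ring
  have key : Real.exp (-T * (1-s)^c) - Real.exp (-T) * (1 + c*T*s + (c^2*T^2/2 - c*(c-1)/2*T)*s^2)
    = Real.exp (-T) * (Real.exp (T*u) - 1 - T*u - (T*u)^2/2) + 
      Real.exp (-T) * (T * (u - c*s + c*(c-1)/2*s^2)) +
      Real.exp (-T) * (T^2/2 * ((u - c*s) * (u+c*s))) := by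
    rw [hexp]; ring
  rw [key]
  refine (abs_add_three _ _ _).trans ?_
  calc _ ≤ _ := add_le_add (add_le_add A1 A2) A3
    _ = _ := by ring

lemma core2 (c : ℝ) (hc : 0 < c) : ∃ C : ℝ, 0 ≤ C ∧ ∀ T s : ℝ, 0 ≤ T → 1/2 ≤ s →
    |Real.exp (-T) * (1 + c*T*s + (c^2*T^2/2 - c*(c-1)/2*T)*s^2)|
      ≤ C * s^3 * ((1+T)^3 * Real.exp (-T)) := by
  refine ⟨8 + c*4 + (c^2/2 + |c*(c-1)/2|)*2, by positivity, ?_⟩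
  intro T s hT hs
  have hT0 : 1 ≤ (1+T)^3 := by nlinarith [pow_nonneg hT 2, pow_nonneg hT 3]
  have hT1 : T ≤ (1+T)^3 := by nlinarith [pow_nonneg hT 2, pow_nonneg hT 3]
  have hT2 : T^2 ≤ (1+T)^3 := by nlinarith [pow_nonneg hT 2, pow_nonneg hT 3]
  have hs0 : 0 ≤ s := by linarith
  have s2 : s^2 ≤ 2*s^3 := by nlinarith [sq_nonneg s]
  have s1 : s ≤ 4*s^3 := by nlinarith
  have s00 : 1 ≤ 8*s^3 := by nlinarith
  rw [abs_mul, abs_of_pos (Real.exp_pos _)]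
  have : |1 + c*T*s + (c^2*T^2/2 - c*(c-1)/2*T)*s^2| ≤ 
      (8 + c*4 + (c^2/2 + |c*(c-1)/2|)*2) * s^3 * (1+T)^3 := by
    calc _ ≤ |(1:ℝ)| + |c*T*s| + |(c^2*T^2/2 - c*(c-1)/2*T)*s^2| := abs_add_three _ _ _
      _ ≤ 1 * 1 + c*T*s + (c^2/2*T^2 + |c*(c-1)/2| * T)*s^2 := by
        rw [abs_one, abs_of_nonneg (a := c*T*s) (by positivity), abs_mul, abs_of_nonneg (sq_nonneg s), one_mul]
        gcongr
        refine (abs_sub _ _).trans ?_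
        rw [abs_mul _ T, abs_of_nonneg hT, abs_of_nonneg (a := c^2*T^2/2) (by positivity)]
        apply le_of_eq; ring
      _ ≤ 8*s^3*(1+T)^3 + c*(1+T)^3*(4*s^3) + (c^2/2*(1+T)^3 + |c*(c-1)/2| * (1+T)^3)*(2*s^3) := by
        gcongr
      _ = _ := by ring
  calc _ ≤ Real.exp (-T) * ((8 + c*4 + (c^2/2 + |c*(c-1)/2|)*2) * s^3 * (1+T)^3) := by gcongr
    _ = _ := by ring

lemma core (c : ℝ) (hc : 0 < c) : ∃ C δ : ℝ, 0 < δ ∧ 0 ≤ C ∧ 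
    (∀ T s : ℝ, 0 ≤ T → s ∈ Set.Icc (0:ℝ) (1/2) →
    |Real.exp (-T * (1-s)^c) - Real.exp (-T) * (1 + c*T*s + (c^2*T^2/2 - c*(c-1)/2*T)*s^2)|
      ≤ C * s^3 * Real.exp (-δ*T)) ∧ 
    (∀ T s : ℝ, 0 ≤ T → 1/2 ≤ s →
    |Real.exp (-T) * (1 + c*T*s + (c^2*T^2/2 - c*(c-1)/2*T)*s^2)|
      ≤ C * s^3 * Real.exp (-δ*T)) := by
  obtain ⟨C1, δ, hδ, hδ1, hC1, h1⟩ := core1 c hc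
  obtain ⟨C2, hC2, h2⟩ := core2 c hc
  obtain ⟨M, hM, h3⟩ := poly_exp (δ/2) (by positivity)
  have h3' : ∀ T : ℝ, 0 ≤ T → (1+T)^3 * Real.exp (-δ*T) ≤ M * Real.exp (-(δ/2)*T) := by
    intro T hT
    have := h3 T hT
    rwa [show -(2*(δ/2)) = -δ by ring] at this
  refine ⟨(C1+C2)*M, δ/2, by positivity, by positivity, ?_, ?_⟩
  · intro T s hT hs
    have hs0 := hs.1
    calc _ ≤ _ := h1 T s hT hs
      _ ≤ (C1+C2) * s^3 * (M * Real.exp (-(δ/2)*T)) := by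
        refine mul_le_mul (by gcongr; linarith) (h3' T hT) (by positivity) (by positivity)
      _ = _ := by ring
  · intro T s hT hs
    have hs0 : 0 ≤ s := by linarith
    calc _ ≤ _ := h2 T s hT hs
      _ ≤ (C1+C2) * s^3 * ((1+T)^3 * Real.exp (-δ*T)) := by
        gcongr
        · linarith
        · nlinarith
      _ ≤ (C1+C2) * s^3 * (M * Real.exp (-(δ/2)*T)) := by
        gcongr (C1+C2) * s^3 * ?_
        exact h3' T hT
      _ = _ := by ring

lemma intg (n : ℕ) (r : ℝ) (hr : 0 < r) : IntegrableOn (fun g : ℝ => g^n * Real.exp (-r*g)) (Set.Ioi 0) := by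
  have := integrableOn_rpow_mul_exp_neg_mul_rpow (s := n) (p := 1) (b := r) (by have := n.cast_nonneg (α := ℝ); linarith) (by norm_num) hr
  simpa using this

lemma intv (n : ℕ) (r : ℝ) (hr : 0 < r) : ∫ g in Set.Ioi (0:ℝ), g^n * Real.exp (-r*g) = n.factorial / r^(n+1) := by
  have := integral_rpow_mul_exp_neg_mul_Ioi (a := n+1) (r := r) (by positivity) hr
  simp only [add_sub_cancel_right, Real.rpow_natCast, Real.Gamma_nat_eq_factorial] at this
  simp only [neg_mul]
  rw [this, ← Nat.cast_add_one, Real.rpow_natCast]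
  simp [div_eq_mul_inv, mul_comm]

lemma bound (c : ℝ) (hc : 0 < c) : ∃ C δ : ℝ, 0 < δ ∧ 0 ≤ C ∧ ∀ η m : ℝ, 0 < η → 2 * η ≤ m →
    |(∫ g in Set.Ioc (0 : ℝ) (m - η), g * Real.exp (-g * ((m - g) / η) ^ c)) -
      (1 / ((m/η)^c)^2 + 6 * c / ((m/η)^c)^3 / m + 12*c*(4*c+1) / ((m/η)^c)^4/m^2)| ≤
      C / (δ * (m/η)^c)^5 / m^3 + m^2 * Real.exp (-(1/2)*m) := by
  obtain ⟨C, δ, hδ, hC, h1, h2⟩ := core c hc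
  refine ⟨C * 24, δ, hδ, by positivity, ?_⟩
  intro η m hη hm
  have hm0 : 0 < m := by linarith
  set l : ℝ := (m/η)^c with hl
  have hl0 : 0 < l := by positivity
  set G : ℝ → ℝ := fun g => g * Real.exp (-g * ((m - g) / η) ^ c) with hG
  set P : ℝ → ℝ := fun g => g * (Real.exp (-(l*g)) * (1 + c*(l*g)*(g/m) + (c^2*(l*g)^2/2 - c*(c-1)/2*(l*g))*(g/m)^2)) with hP
  have hP' : P = fun g => (g^1 * Real.exp (-l*g)) + (c*l/m) * (g^3 * Real.exp (-l*g)) +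
      (c^2*l^2/2/m^2) * (g^5 * Real.exp (-l*g)) - (c*(c-1)/2*l/m^2) * (g^4 * Real.exp (-l*g)) := by
    funext g
    simp only [hP, neg_mul]
    field_simp
    ring
  have i1 := intg 1 l hl0
  have i3 := (intg 3 l hl0).const_mul (c*l/m)
  have i5 := (intg 5 l hl0).const_mul (c^2*l^2/2/m^2)
  have i4 := (intg 4 l hl0).const_mul (c*(c-1)/2*l/m^2)
  have hPi : IntegrableOn P (Set.Ioi 0) := by
    rw [hP']
    exact ((i1.add i3).add i5).sub i4
  have hPv : ∫ g in Set.Ioi (0:ℝ), P g = 1 / l^2 + 6 * c / l^3 / m + 12*c*(4*c+1) / l^4/m^2 := by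
    rw [hP']
    refine (integral_sub ((i1.add i3).add i5) i4).trans ?_
    rw [integral_add' (i1.add i3) i5, integral_add' i1 i3]
    simp only [integral_const_mul]
    rw [intv 1 l hl0, intv 3 l hl0, intv 4 l hl0, intv 5 l hl0]
    simp only [Nat.factorial]
    push_cast
    field_simp
    ring
  have hGc : Continuous G := by
    have : Continuous (fun g : ℝ => ((m - g) / η) ^ c) :=
      Continuous.rpow_const (by fun_prop) (fun _ => Or.inr hc.le)
    fun_prop
  have hGi : IntegrableOn ((Set.Ioc 0 (m-η)).indicator G) (Set.Ioi 0) := by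
    apply Integrable.integrableOn
    rw [integrable_indicator_iff measurableSet_Ioc]
    exact (hGc.integrableOn_Icc).mono_set Set.Ioc_subset_Icc_self
  have hGv : ∫ g in Set.Ioc (0:ℝ) (m-η), G g = ∫ g in Set.Ioi (0:ℝ), (Set.Ioc 0 (m-η)).indicator G g := by
    rw [setIntegral_indicator measurableSet_Ioc, Set.inter_eq_right.2 Set.Ioc_subset_Ioi_self]
  have j1 : IntegrableOn (fun g : ℝ => C / m^3 * (g^4 * Real.exp (-(δ*l)*g))) (Set.Ioi 0) :=
    (intg 4 (δ*l) (by positivity)).const_mul _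
  have j2 : IntegrableOn ((Set.Ioc 0 m).indicator (fun _ : ℝ => m * Real.exp (-(1/2)*m))) (Set.Ioi 0) := by
    apply Integrable.integrableOn
    rw [integrable_indicator_iff measurableSet_Ioc]
    exact integrableOn_const (by simp)
  rw [hGv, ← hPv, ← integral_sub hGi hPi]
  have hfin := norm_integral_le_of_norm_le (j1.add j2) 
    (f := fun g => (Set.Ioc 0 (m-η)).indicator G g - P g) (by
      refine (ae_restrict_iff' measurableSet_Ioi).2 (Eventually.of_forall fun g hg => ?_)
      have hg0 : 0 < g := hg
      have hT : 0 ≤ l * g := by positivity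
      have hgm : 0 ≤ g / m := by positivity
      have eB : C / m^3 * (g^4 * Real.exp (-(δ*l)*g)) = g * (C * (g/m)^3 * Real.exp (-δ*(l*g))) := by
        rw [show -δ*(l*g) = -(δ*l)*g by ring]
        field_simp
      have hind : 0 ≤ (Set.Ioc 0 m).indicator (fun _ : ℝ => m * Real.exp (-(1/2)*m)) g :=
        Set.indicator_nonneg (fun _ _ => by positivity) g
      simp only [Pi.add_apply]
      rw [eB, Real.norm_eq_abs]
      have tail : 1/2 ≤ g/m → |P g| ≤ g * (C * (g/m)^3 * Real.exp (-δ*(l*g))) := by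
        intro hh
        simp only [hP]
        rw [abs_mul, abs_of_pos hg0]
        exact mul_le_mul_of_nonneg_left (h2 _ _ hT hh) hg0.le
      by_cases hgη : g ≤ m - η
      · rw [Set.indicator_of_mem (show g ∈ Set.Ioc 0 (m-η) from ⟨hg0, hgη⟩)]
        by_cases hgs : g / m ≤ 1/2
        · have e : G g = g * Real.exp (-(l*g) * (1 - g/m)^c) := by
            simp only [hG, hl]
            rw [show (m-g)/η = (m/η) * (1 - g/m) by field_simp, Real.mul_rpow (by positivity) (by linarith)]
            congr 2; ring
          have : |G g - P g| ≤ g * (C * (g/m)^3 * Real.exp (-δ*(l*g))) := by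
            rw [e]
            simp only [hP]
            rw [← mul_sub, abs_mul, abs_of_pos hg0]
            exact mul_le_mul_of_nonneg_left (h1 _ _ hT ⟨hgm, hgs⟩) hg0.le
          linarith
        · push Not at hgs
          refine (abs_sub _ _).trans ?_
          rw [add_comm]
          refine add_le_add (tail hgs.le) ?_
          rw [Set.indicator_of_mem (show g ∈ Set.Ioc 0 m from ⟨hg0, by linarith⟩)]
          rw [lt_div_iff₀ hm0] at hgs
          have hq : 1 ≤ ((m-g)/η)^c := Real.one_le_rpow (by rw [le_div_iff₀ hη]; linarith) hc.le
          rw [abs_of_nonneg (by positivity)]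
          simp only [hG]
          have : Real.exp (-g * ((m - g) / η) ^ c) ≤ Real.exp (-(1/2)*m) := by
            apply Real.exp_le_exp.2
            nlinarith
          have hgm' : g ≤ m := by linarith
          gcongr
      · rw [Set.indicator_of_notMem (fun h => hgη h.2), zero_sub, abs_neg]
        push Not at hgη
        have := tail (by rw [le_div_iff₀ hm0]; linarith)
        linarith)
  rw [Real.norm_eq_abs] at hfin
  refine hfin.trans (le_of_eq ?_)
  erw [integral_add j1 j2]
  rw [integral_const_mul, intv 4 _ (by positivity), setIntegral_indicator measurableSet_Ioc,
    Set.inter_eq_right.2 Set.Ioc_subset_Ioi_self, setIntegral_const]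
  simp [hm0.le, Nat.factorial]
  field_simp

/-- Asymptotic expansion, for `η > 0` and `b > 1`, of
`∫_0^{m-η} g·exp(-g((m-g)/η)^{b-1}) dg` as `m → ∞`. -/
theorem integral_g_exp_expansion (η b : ℝ) (hη : 0 < η) (hb : 1 < b) :
    (fun m : ℝ =>
        (∫ g in Set.Ioc (0 : ℝ) (m - η), g * Real.exp (-g * ((m - g) / η) ^ (b - 1))) -
          (η ^ (2 * b - 2) / m ^ (2 * b - 2)
            + 6 * (b - 1) * η ^ (3 * b - 3) / m ^ (3 * b - 2)
            + 12 * (b - 1) * (4 * b - 3) * η ^ (4 * b - 4) / m ^ (4 * b - 2)))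
      =o[atTop] (fun m : ℝ => m ^ (-(4 * b - 2))) := by
  obtain ⟨C, δ, hδ, hC, h⟩ := bound (b-1) (by linarith)
  have hO : (fun m : ℝ =>
        (∫ g in Set.Ioc (0 : ℝ) (m - η), g * Real.exp (-g * ((m - g) / η) ^ (b - 1))) -
          (η ^ (2 * b - 2) / m ^ (2 * b - 2)
            + 6 * (b - 1) * η ^ (3 * b - 3) / m ^ (3 * b - 2)
            + 12 * (b - 1) * (4 * b - 3) * η ^ (4 * b - 4) / m ^ (4 * b - 2)))
      =O[atTop] (fun m : ℝ => C / (δ * (m/η)^(b-1))^5 / m^3 + m^2 * Real.exp (-(1/2)*m)) := by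
    refine IsBigO.of_bound 1 ?_
    filter_upwards [eventually_ge_atTop (2*η)] with m hm
    have hm0 : 0 < m := by linarith
    rw [one_mul, Real.norm_eq_abs, Real.norm_eq_abs]
    refine le_trans ?_ (le_abs_self _)
    refine le_trans (le_of_eq ?_) (h η m hη hm)
    have pw : ∀ (x : ℝ), 0 < x → ∀ n : ℕ, (x^(b-1))^n = x^((b-1)*n) := by
      intro x hx n
      rw [Real.rpow_mul hx.le, Real.rpow_natCast]
    congr 2
    rw [Real.div_rpow hm0.le hη.le]
    simp only [div_pow, pw m hm0, pw η hη]
    rw [show 3*b-2 = (b-1)*(3:ℕ)+1 by push_cast; ring, show 4*b-2 = (b-1)*(4:ℕ)+(2:ℕ) by push_cast; ring,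
      show 2*b-2 = (b-1)*(2:ℕ) by push_cast; ring, show 3*b-3 = (b-1)*(3:ℕ) by push_cast; ring,
      show 4*b-4 = (b-1)*(4:ℕ) by push_cast; ring, Real.rpow_add hm0, Real.rpow_add hm0, Real.rpow_one,
      Real.rpow_natCast m 2]
    field_simp
    ring
  refine hO.trans_isLittleO (IsLittleO.add ?_ ?_)
  · have e : (fun m : ℝ => C / (δ * (m/η)^(b-1))^5 / m^3) =ᶠ[atTop]
        fun m => (C / (δ/η^(b-1))^5) * m^(-(5*b-2)) := by
      filter_upwards [eventually_gt_atTop 0] with m hm0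
      have : m^(-(5*b-2)) = ((m^(b-1))^5 * m^3)⁻¹ := by
        rw [Real.rpow_neg hm0.le, ← Real.rpow_natCast, ← Real.rpow_natCast, ← Real.rpow_mul hm0.le, ← Real.rpow_add hm0]
        congr 2; push_cast; ring
      rw [this, Real.div_rpow hm0.le hη.le]
      field_simp
    refine IsLittleO.congr' (IsLittleO.const_mul_left ?_ _) e.symm EventuallyEq.rfl
    refine isLittleO_of_tendsto' ?_ ?_
    · filter_upwards [eventually_gt_atTop 0] with m hm0 h0
      exact absurd h0 (by positivity)
    · refine (tendsto_rpow_neg_atTop (y := b) (by linarith)).congr' ?_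
      filter_upwards [eventually_gt_atTop 0] with m hm0
      rw [← Real.rpow_sub hm0]
      congr 1; ring
  · have h1 := isLittleO_exp_neg_mul_rpow_atTop (a := 1/2) (by norm_num) (-(4*b))
    refine ((isBigO_refl (fun m : ℝ => m^2) atTop).mul_isLittleO h1).congr' EventuallyEq.rfl ?_
    filter_upwards [eventually_gt_atTop 0] with m hm0
    rw [← Real.rpow_natCast, ← Real.rpow_add hm0]
    congr 1; push_cast; ring
end
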